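/- arXiv:2310.10112 — 3 statements merged into one kernel-verified Lean document; each statement's English description precedes it below -/
import Mathlib

section
/- Let f and m be integers with 3 ≤ m and m ∣ f. Then the image of the Stickelberger element θ_f under the restriction map ℚ[(ℤ/fℤ)ˣ] → ℚ[(ℤ/mℤ)ˣ] equals ( ∏_ℓ (1 − [ℓ]⁻¹) ) · θ_m, where the product runs over the primes ℓ dividing f but not dividing m, and [ℓ] denotes the group-algebra basis element given by the class of ℓ in (ℤ/mℤ)ˣ. -/
open MonoidAlgebra Finset
open scoped Classical

/-- The class of a natural number `a` coprime to `m` in `(ℤ/mℤ)ˣ`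
(junk value `1` when `a` is not invertible mod `m`). -/
noncomputable def unitOf (m a : ℕ) : (ZMod m)ˣ :=
  if h : IsUnit ((a : ZMod m)) then h.unit else 1

/-- The Stickelberger element `θ_N = -∑_a (a/N - 1/2)·[a]⁻¹ ∈ ℚ[(ℤ/Nℤ)ˣ]`,
the sum running over the integers `1 ≤ a ≤ N` coprime to `N`. -/
noncomputable def stickelberger (N : ℕ) : MonoidAlgebra ℚ (ZMod N)ˣ :=
  ∑ a ∈ (Finset.Icc 1 N).filter (fun a => Nat.Coprime a N),
    MonoidAlgebra.single (unitOf N a)⁻¹ (-((a : ℚ) / N - 1 / 2))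

/-! The argument uses only one property of `φ x = 1/2 - x`, namely `∑_{j<k} φ((x + j)/k) = φ(x)`. It
says that the terms of `θ_{nk}` that agree mod `n` add up to the corresponding term of `θ_n`, as long
as the sum runs over all `a ≤ nk` coprime to `n`. Passing from level `np` down to level `n`, this is
the whole story if `p ∣ n`. If `p ∤ n` one has to take away the terms with `p ∣ a`, and writing
`a = pb` shows that they amount to `[p]⁻¹ θ_n`. The general case follows one prime at a time. -/

lemma sum_Icc_mul {M : Type*} [AddCommMonoid M] (F : ℕ → M) (n k : ℕ) :
    ∑ a ∈ Icc 1 (n * k), F a = ∑ i ∈ Icc 1 n, ∑ j ∈ range k, F (i + n * j) := by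
  have sum_Icc_eq_sum_range (N : ℕ) (G : ℕ → M) :
      ∑ a ∈ Icc 1 N, G a = ∑ a ∈ range N, G (a + 1) := by
    rw [range_eq_Ico, sum_Ico_add' G 0 N 1]
    rfl
  simp only [sum_Icc_eq_sum_range]
  rw [sum_comm]
  induction k with
  | zero => simp
  | succ k ih =>
    rw [Nat.mul_succ, sum_range_add, ih, sum_range_succ]
    simp only [add_right_comm, add_comm (n * k)]

lemma sum_Icc_filter_dvd {M : Type*} [AddCommMonoid M] (F : ℕ → M) (n : ℕ) {p : ℕ} (hp : p ≠ 0) :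
    ∑ a ∈ Icc 1 (n * p) with p ∣ a, F a = ∑ b ∈ Icc 1 n, F (p * b) := by
  have hp' : 0 < p := Nat.pos_of_ne_zero hp
  have multiples_eq_image : {a ∈ Icc 1 (n * p) | p ∣ a} = (Icc 1 n).image (p * ·) := by
    ext a
    simp only [mem_filter, mem_image, mem_Icc]
    constructor
    · rintro ⟨⟨one_le, le⟩, b, rfl⟩
      exact ⟨b, ⟨Nat.pos_of_mul_pos_left one_le,
        Nat.le_of_mul_le_mul_left (mul_comm n p ▸ le) hp'⟩, rfl⟩
    · rintro ⟨b, ⟨one_le, le⟩, rfl⟩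
      exact ⟨⟨Nat.mul_pos hp' one_le, mul_comm n p ▸ Nat.mul_le_mul_left p le⟩, dvd_mul_right p b⟩
  rw [multiples_eq_image, sum_image fun _ _ _ _ h => Nat.eq_of_mul_eq_mul_left hp' h]

lemma coe_unitOf {m a : ℕ} (ha : a.Coprime m) : (unitOf m a : ZMod m) = a := by
  simp [unitOf, (ZMod.isUnit_iff_coprime a m).2 ha]

lemma unitOf_mul {m a b : ℕ} (ha : a.Coprime m) (hb : b.Coprime m) :
    unitOf m (a * b) = unitOf m a * unitOf m b := by
  ext
  rw [Units.val_mul, coe_unitOf ha, coe_unitOf hb, coe_unitOf (ha.mul_left hb), Nat.cast_mul]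

lemma unitOf_add_mul_self (m a j : ℕ) : unitOf m (a + m * j) = unitOf m a := by
  simp [unitOf]

lemma unitsMap_unitOf {m f a : ℕ} (h : m ∣ f) (ha : a.Coprime f) :
    ZMod.unitsMap h (unitOf f a) = unitOf m a := by
  ext
  rw [coe_unitOf (ha.coprime_dvd_right h), ZMod.unitsMap_def, Units.coe_map, coe_unitOf ha]
  exact map_natCast (ZMod.castHom h (ZMod m)) a

section Distribution

variable {R : Type*}

/-- A distribution of weight `0`: the values of `φ` at the solutions `y = (x + j)/k`, `0 ≤ j < k`,
of `ky ≡ x mod 1` add up to `φ x`. Periodicity of `φ` mod `1` is not part of the definition, so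
that polynomials such as `1/2 - x` qualify. -/
def IsDistribution [AddCommMonoid R] (φ : ℚ → R) : Prop :=
  ∀ k : ℕ, k ≠ 0 → ∀ x : ℚ, ∑ j ∈ range k, φ ((x + j) / k) = φ x

/-- The element `∑_a φ(a/N)·[a]⁻¹` of `R[(ℤ/Nℤ)ˣ]`, the sum running over the `1 ≤ a ≤ N` coprime to
`N`; the Stickelberger element is the case `φ x = 1/2 - x`. -/
noncomputable def distributionElement [Semiring R] (φ : ℚ → R) (N : ℕ) :
    MonoidAlgebra R (ZMod N)ˣ :=
  ∑ a ∈ Icc 1 N with a.Coprime N, single (unitOf N a)⁻¹ (φ ((a : ℚ) / N))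

/-- The restriction (norm) map `R[(ℤ/fℤ)ˣ] → R[(ℤ/mℤ)ˣ]` for `m ∣ f`. -/
noncomputable abbrev restriction (R : Type*) [Semiring R] {m f : ℕ} (h : m ∣ f) :
    MonoidAlgebra R (ZMod f)ˣ →+* MonoidAlgebra R (ZMod m)ˣ :=
  mapDomainRingHom R (ZMod.unitsMap h)

section Semiring

variable [Semiring R]

lemma restriction_single_unitOf {m f a : ℕ} (h : m ∣ f) (ha : a.Coprime f) (r : R) :
    restriction R h (single (unitOf f a)⁻¹ r) = single (unitOf m a)⁻¹ r := by
  rw [mapDomainRingHom_apply, mapDomain_single, map_inv, unitsMap_unitOf h ha]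

lemma restriction_self (n : ℕ) (x : MonoidAlgebra R (ZMod n)ˣ) :
    restriction R (dvd_refl n) x = x := by
  rw [restriction, ZMod.unitsMap_self, mapDomainRingHom_id, RingHom.id_apply]

lemma restriction_restriction {m n f : ℕ} (hmn : m ∣ n) (hnf : n ∣ f)
    (x : MonoidAlgebra R (ZMod f)ˣ) :
    restriction R hmn (restriction R hnf x) = restriction R (hmn.trans hnf) x := by
  rw [restriction, restriction, restriction, ← ZMod.unitsMap_comp hmn hnf, mapDomainRingHom_comp,
    RingHom.comp_apply]

lemma restriction_distributionElement (φ : ℚ → R) {n f : ℕ} (h : n ∣ f) :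
    restriction R h (distributionElement φ f) =
      ∑ a ∈ Icc 1 f with a.Coprime f, single (unitOf n a)⁻¹ (φ ((a : ℚ) / f)) := by
  rw [distributionElement, map_sum]
  exact sum_congr rfl fun a ha => restriction_single_unitOf h (mem_filter.1 ha).2 _

lemma IsDistribution.sum_coprime_eq_distributionElement {φ : ℚ → R} (hφ : IsDistribution φ)
    (n : ℕ) {k : ℕ} (hk : k ≠ 0) :
    ∑ a ∈ Icc 1 (n * k) with a.Coprime n, single (unitOf n a)⁻¹ (φ ((a : ℚ) / (n * k : ℕ))) =
      distributionElement φ n := by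
  rw [distributionElement, sum_filter, sum_filter, sum_Icc_mul]
  refine sum_congr rfl fun i hi => ?_
  have hn : (n : ℚ) ≠ 0 := by
    have := mem_Icc.1 hi
    exact_mod_cast (by lia : n ≠ 0)
  have div_eq (j : ℕ) : ((i + n * j : ℕ) : ℚ) / (n * k : ℕ) = ((i : ℚ) / n + j) / k := by
    push_cast
    field_simp
  simp only [Nat.coprime_add_mul_left_left, unitOf_add_mul_self, div_eq]
  split_ifs
  · rw [← hφ k hk (i / n)]
    exact (map_sum (singleAddHom (unitOf n i)⁻¹) _ _).symm
  · exact sum_const_zero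

lemma sum_coprime_dvd_eq_single_mul_distributionElement (φ : ℚ → R) {n p : ℕ} (hp : p ≠ 0)
    (hpn : p.Coprime n) :
    ∑ a ∈ Icc 1 (n * p) with a.Coprime n ∧ p ∣ a,
        single (unitOf n a)⁻¹ (φ ((a : ℚ) / (n * p : ℕ))) =
      single (unitOf n p)⁻¹ 1 * distributionElement φ n := by
  simp only [and_comm (b := p ∣ _)]
  rw [distributionElement, mul_sum, ← filter_filter, sum_filter, sum_Icc_filter_dvd _ n hp,
    sum_filter]
  refine sum_congr rfl fun b _ => ?_
  simp only [Nat.coprime_mul_iff_left, and_iff_right hpn]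
  split_ifs with hb
  · rw [single_mul_single, one_mul, unitOf_mul hpn hb, mul_inv, Nat.cast_mul, Nat.cast_mul,
      mul_comm (n : ℚ), mul_div_mul_left _ _ (Nat.cast_ne_zero.2 hp)]
  · rfl

lemma IsDistribution.restriction_mul_of_dvd {φ : ℚ → R} (hφ : IsDistribution φ) {n k : ℕ}
    (hk : k ≠ 0) (hkn : k ∣ n) :
    restriction R (dvd_mul_right n k) (distributionElement φ (n * k)) =
      distributionElement φ n := by
  have coprime_iff (a : ℕ) : a.Coprime (n * k) ↔ a.Coprime n := by
    rw [Nat.coprime_mul_iff_right, and_iff_left_of_imp fun h => h.coprime_dvd_right hkn]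
  simp only [restriction_distributionElement, coprime_iff]
  exact hφ.sum_coprime_eq_distributionElement n hk

end Semiring

lemma IsDistribution.restriction_mul_prime_of_not_dvd [Ring R] {φ : ℚ → R} (hφ : IsDistribution φ)
    {n p : ℕ} (hp : p.Prime) (hpn : ¬p ∣ n) :
    restriction R (dvd_mul_right n p) (distributionElement φ (n * p)) =
      (1 - single (unitOf n p)⁻¹ 1) * distributionElement φ n := by
  have coprime_iff (a : ℕ) : a.Coprime (n * p) ↔ a.Coprime n ∧ ¬p ∣ a := by
    rw [Nat.coprime_mul_iff_right, Nat.coprime_comm (m := p), hp.coprime_iff_not_dvd]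
  rw [sub_mul, one_mul, eq_sub_iff_add_eq, restriction_distributionElement,
    ← sum_coprime_dvd_eq_single_mul_distributionElement φ hp.ne_zero
      (hp.coprime_iff_not_dvd.2 hpn),
    ← hφ.sum_coprime_eq_distributionElement n hp.ne_zero]
  simp only [coprime_iff, ← filter_filter]
  rw [add_comm, sum_filter_add_sum_filter_not]

section CommRing

variable [CommRing R]

variable (R) in
/-- The product of the Euler factors `1 - [ℓ]⁻¹` in `R[(ℤ/mℤ)ˣ]` by which the level `f` element
differs, after restriction, from the level `m` element. -/
noncomputable def eulerProduct (m f : ℕ) : MonoidAlgebra R (ZMod m)ˣ :=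
  ∏ ℓ ∈ f.primeFactors \ m.primeFactors, (1 - single (unitOf m ℓ)⁻¹ 1)

lemma eulerProduct_self (m : ℕ) : eulerProduct R m m = 1 := by
  rw [eulerProduct, sdiff_self, bot_eq_empty, prod_empty]

lemma restriction_eulerProduct {m n : ℕ} (hn : n ≠ 0) (hmn : m ∣ n) (f : ℕ) :
    restriction R hmn (eulerProduct R n f) =
      ∏ ℓ ∈ f.primeFactors \ n.primeFactors, (1 - single (unitOf m ℓ)⁻¹ 1) := by
  rw [eulerProduct, map_prod]
  refine prod_congr rfl fun ℓ hℓ => ?_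
  obtain ⟨hℓf, hℓn⟩ := mem_sdiff.1 hℓ
  have hℓ_prime : ℓ.Prime := Nat.prime_of_mem_primeFactors hℓf
  have coprime : ℓ.Coprime n :=
    hℓ_prime.coprime_iff_not_dvd.2 fun h => hℓn (hℓ_prime.mem_primeFactors h hn)
  rw [map_sub, map_one, restriction_single_unitOf hmn coprime]

lemma restriction_eulerProduct_mul_eulerProduct {m n f : ℕ} (hf : f ≠ 0) (hmn : m ∣ n)
    (hnf : n ∣ f) :
    restriction R hmn (eulerProduct R n f) * eulerProduct R m n = eulerProduct R m f := by
  have hn : n ≠ 0 := ne_zero_of_dvd_ne_zero hf hnf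
  have subset_mn : m.primeFactors ⊆ n.primeFactors := Nat.primeFactors_mono hmn hn
  have subset_nf : n.primeFactors ⊆ f.primeFactors := Nat.primeFactors_mono hnf hf
  rw [restriction_eulerProduct hn, eulerProduct, eulerProduct,
    ← prod_sdiff (sdiff_subset_sdiff subset_nf (Subset.refl m.primeFactors)),
    sdiff_sdiff_sdiff_cancel_right subset_mn]

lemma IsDistribution.restriction_mul_prime {φ : ℚ → R} (hφ : IsDistribution φ) {n p : ℕ}
    (hn : n ≠ 0) (hp : p.Prime) :
    restriction R (dvd_mul_right n p) (distributionElement φ (n * p)) =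
      eulerProduct R n (n * p) * distributionElement φ n := by
  rw [eulerProduct, Nat.primeFactors_mul hn hp.ne_zero, hp.primeFactors, union_sdiff_left]
  by_cases hpn : p ∣ n
  · rw [sdiff_eq_empty_iff_subset.2 (singleton_subset_iff.2 (hp.mem_primeFactors hpn hn)),
      prod_empty, one_mul, hφ.restriction_mul_of_dvd hp.ne_zero hpn]
  · rw [sdiff_eq_self_of_disjoint
        (disjoint_singleton_left.2 fun h => hpn (Nat.dvd_of_mem_primeFactors h)),
      prod_singleton, hφ.restriction_mul_prime_of_not_dvd hp hpn]

theorem stickelberger_norm_general {φ : ℚ → R} (hφ : IsDistribution φ) {f m : ℕ} (hf : f ≠ 0)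
    (hdvd : m ∣ f) :
    restriction R hdvd (distributionElement φ f) =
      eulerProduct R m f * distributionElement φ m := by
  obtain ⟨k, hk⟩ := id hdvd
  induction k using induction_on_primes generalizing f with
  | zero => exact absurd hk hf
  | one =>
    obtain rfl : f = m := by rw [hk, mul_one]
    rw [restriction_self, eulerProduct_self, one_mul]
  | prime_mul p k hp ih =>
    obtain rfl : f = m * k * p := by rw [hk, mul_assoc, mul_comm k]
    have hmk : m * k ≠ 0 := left_ne_zero_of_mul hf
    have m_dvd : m ∣ m * k := dvd_mul_right m k
    have mk_dvd : m * k ∣ m * k * p := dvd_mul_right (m * k) p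
    rw [← restriction_restriction m_dvd mk_dvd, hφ.restriction_mul_prime hmk hp, map_mul,
      ih hmk m_dvd rfl, ← mul_assoc, restriction_eulerProduct_mul_eulerProduct hf m_dvd mk_dvd]

end CommRing

end Distribution

lemma isDistribution_neg_sub_half : IsDistribution fun x : ℚ => -(x - 1 / 2) := by
  intro k hk x
  have gauss (n : ℕ) : ∑ j ∈ range n, (j : ℚ) = n * (n - 1) / 2 := by
    induction n with
    | zero => simp
    | succ n ih => rw [sum_range_succ, ih]; push_cast; ring
  have hk' : (k : ℚ) ≠ 0 := Nat.cast_ne_zero.2 hk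
  simp only [sum_neg_distrib, sum_sub_distrib, ← sum_div, sum_add_distrib, gauss, sum_const,
    card_range, nsmul_eq_mul]
  field_simp
  ring

lemma stickelberger_eq_distributionElement (N : ℕ) :
    stickelberger N = distributionElement (fun x : ℚ => -(x - 1 / 2)) N :=
  rfl

/-- **Norms of Stickelberger elements.** For `3 ≤ m ∣ f`, the image of `θ_f` under the
restriction map `ℚ[(ℤ/fℤ)ˣ] → ℚ[(ℤ/mℤ)ˣ]` equals `(∏_ℓ (1 - [ℓ]⁻¹))·θ_m`, the product
running over the primes `ℓ` dividing `f` but not dividing `m`. -/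
theorem stickelberger_norm (f m : ℕ) (hm : 3 ≤ m) (hf : 3 ≤ f) (hdvd : m ∣ f) :
    MonoidAlgebra.mapDomainRingHom ℚ
        (Units.map (ZMod.castHom hdvd (ZMod m)).toMonoidHom) (stickelberger f)
      = (∏ ℓ ∈ f.primeFactors \ m.primeFactors,
          (1 - MonoidAlgebra.single (unitOf m ℓ)⁻¹ (1 : ℚ))) * stickelberger m := by
  rw [stickelberger_eq_distributionElement, stickelberger_eq_distributionElement]
  exact stickelberger_norm_general isDistribution_neg_sub_half (by lia) hdvd
end

section
/- Let m ≥ 3 be a squarefree integer with m ≡ 3 (mod 4), and let t be the number of prime divisors of m. Define the integer S = ∑_a J(m|a)·(a² − 4m·a), where the sum runs over the odd integers a with 1 ≤ a ≤ 4m and J(m|a) denotes the Jacobi symbol (which vanishes when gcd(a, m) > 1). Then 2^(t+4) divides S if m ≡ 7 (mod 8), and 2^(t+3) divides S if m ≡ 3 (mod 8). -/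
open Finset

/-!
Write `ψ_d = χ₄ · J(· | d)`, which for `d ≡ 3 (mod 4)` is `J(d | ·)` on positive odd integers
by reciprocity, and `T(N, f) = ∑_{a < N} f(a) (a² - N a)`. For odd squarefree `n` the sum over
`d ∣ n` of the characters mod `n` induced by `J(· | d)` is `∏_{p ∣ n} (J(· | p) + J(· | p)²)`,
hence divisible by `2 ^ ω(n)`. Averaging it against `a ↦ -a` (and `a ↦ 2a`) isolates the divisors
`d ≡ 3 (mod 4)` (respectively `d ≡ 7 (mod 8)`) and makes the sum `F` of their characters an odd
function, for which folding modulo `4n` gives `T(4n, χ₄ F) = -16 n ∑_j χ₄(n + 2j) j F(2j)`, with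
`j ≤ (n - 1) / 2`. When moreover `F(2a) = F(a)`, one has `∑_j j F(j) = 0`, which gains a further
factor `4` and makes up for the extra average.

This bounds the sum over `d` of `T(4n, ψ_d · J(· | n/d)²)`. Its terms with `d < n` equal
`T(4d, ψ_d)` times `n/d` and the Euler factors `1 - p ψ_d(p)`, one for each prime `p ∣ n/d`; these
are even, so induction on `n` leaves the required bound for `T(4n, ψ_n)`. The same Euler factors
reduce a general `m` to its squarefree part.
-/

section

open Function ZMod NumberTheorySymbols

/-- The quadratic Stickelberger sum `∑_{0 ≤ a < N} f(a) (a² - N a)`, linear in `f`. When `f` is a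
nontrivial Dirichlet character modulo `N`, it is `N` times the generalized Bernoulli number
`B_{2,f}`. -/
def stickelbergerSum (N : ℕ) : (ℤ → ℤ) →ₗ[ℤ] ℤ :=
  ∑ a ∈ range N, ((a : ℤ) ^ 2 - N * a) • LinearMap.proj (a : ℤ)

theorem stickelbergerSum_apply (N : ℕ) (f : ℤ → ℤ) :
    stickelbergerSum N f = ∑ a ∈ range N, f a * ((a : ℤ) ^ 2 - N * a) := by
  simp [stickelbergerSum, mul_comm]

theorem sum_range_mul_eq_sum_sum {M : Type*} [AddCommMonoid M] (p N : ℕ) (f : ℕ → M) :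
    ∑ i ∈ range (p * N), f i = ∑ a ∈ range N, ∑ k ∈ range p, f (a + k * N) := by
  rw [sum_comm]
  induction p with
  | zero => simp
  | succ p ih =>
    rw [Nat.succ_mul, sum_range_add, ih, sum_range_succ]
    simp only [add_comm (p * N)]

theorem sum_range_mul_filter_dvd {M : Type*} [AddCommMonoid M] {p : ℕ} (hp : 0 < p) (N : ℕ)
    (f : ℕ → M) : ∑ i ∈ range (p * N) with p ∣ i, f i = ∑ a ∈ range N, f (p * a) := by
  have himage : {i ∈ range (p * N) | p ∣ i} = (range N).image (p * ·) := by
    ext i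
    simp only [mem_filter, mem_range, mem_image]
    constructor
    · rintro ⟨hi, a, rfl⟩
      exact ⟨a, Nat.lt_of_mul_lt_mul_left hi, rfl⟩
    · rintro ⟨a, ha, rfl⟩
      exact ⟨Nat.mul_lt_mul_of_pos_left ha hp, dvd_mul_right p a⟩
  rw [himage, sum_image fun a _ b _ hab ↦ Nat.eq_of_mul_eq_mul_left hp hab]

theorem sum_range_two_mul_of_antiperiodic {M : Type*} [AddCommGroup M] {f : ℤ → M} {h : ℕ}
    (hf : Antiperiodic f h) :
    ∑ a ∈ range (2 * h), f a = 0 := by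
  rw [two_mul, sum_range_add, ← sum_add_distrib]
  exact sum_eq_zero fun a _ ↦ by rw [Nat.cast_add, add_comm (h : ℤ), hf, add_neg_cancel]

theorem stickelbergerSum_two_mul_of_antiperiodic {f : ℤ → ℤ} {h : ℕ} (hf : Antiperiodic f h) :
    stickelbergerSum (2 * h) f = h * ∑ a ∈ range h, f a * (h - 2 * a) := by
  rw [stickelbergerSum_apply, two_mul, sum_range_add, ← sum_add_distrib, mul_sum]
  refine sum_congr rfl fun a _ ↦ ?_
  rw [Nat.cast_add h a, add_comm (h : ℤ) a, hf]
  push_cast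
  ring

theorem stickelbergerSum_mul_of_periodic {f : ℤ → ℤ} {N : ℕ} (hf : Periodic f N)
    (hsum : ∑ a ∈ range N, f a = 0) (p : ℕ) :
    stickelbergerSum (p * N) f = p * stickelbergerSum N f := by
  have hsum_range : (∑ k ∈ range p, (k : ℤ)) * 2 = p * (p - 1) := by
    induction p with
    | zero => simp
    | succ p ih => rw [sum_range_succ, add_mul, ih]; push_cast; ring
  set C : ℤ := ∑ k ∈ range p, ((k * N : ℤ) ^ 2 - p * N * (k * N)) with hC
  have hblock (a : ℕ) : ∑ k ∈ range p, f (a + k * N : ℕ) *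
      (((a + k * N : ℕ) : ℤ) ^ 2 - (p * N : ℕ) * (a + k * N : ℕ)) =
      p * (f a * ((a : ℤ) ^ 2 - N * a)) + f a * C := by
    have hterm (k : ℕ) : f (a + k * N : ℕ) *
        (((a + k * N : ℕ) : ℤ) ^ 2 - (p * N : ℕ) * (a + k * N : ℕ)) =
        f a * (((k * N : ℤ) ^ 2 - p * N * (k * N)) + k * (2 * N * a) + (a ^ 2 - p * N * a)) := by
      have hk : f (a + k * N : ℕ) = f a := by exact_mod_cast hf.nat_mul k a
      rw [hk]
      push_cast
      ring
    simp only [hterm, ← mul_sum, sum_add_distrib, ← sum_mul, ← hC, sum_const, card_range,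
      nsmul_eq_mul]
    linear_combination f a * (N * a) * hsum_range
  simp only [stickelbergerSum_apply, sum_range_mul_eq_sum_sum p N, hblock, sum_add_distrib,
    ← mul_sum, ← sum_mul, hsum, zero_mul, add_zero]

theorem jacobiSym_sq_eq_ite (a : ℤ) {N : ℕ} (hN : N ≠ 0) :
    J(a | N) ^ 2 = if a.gcd N = 1 then 1 else 0 := by
  split_ifs with h
  · exact jacobiSym.sq_one h
  · rw [jacobiSym.eq_zero_iff.2 ⟨hN, h⟩, zero_pow two_ne_zero]

theorem jacobiSym_periodic {d N : ℕ} (h : d ∣ N) : Periodic (J(· | d)) (N : ℤ) := fun a ↦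
  jacobiSym.mod_left' <|
    ((Int.modEq_zero_iff_dvd.2 (Int.natCast_dvd_natCast.2 h)).add_left a).trans (by rw [add_zero])

theorem stickelbergerSum_mul_jacobiSym_sq_prime {f : ℤ → ℤ} {h p : ℕ} (hf : Antiperiodic f h)
    (hp : p.Prime) (hmul : ∀ a, f (p * a) = f p * f a) :
    stickelbergerSum (p * (2 * h)) (fun a ↦ f a * J(a | p) ^ 2) =
      p * (1 - p * f p) * stickelbergerSum (2 * h) f := by
  have hdvd (a : ℕ) : J(a | p) ^ 2 = if p ∣ a then 0 else 1 := by
    rw [jacobiSym_sq_eq_ite _ hp.ne_zero, Int.gcd_natCast_natCast, Nat.gcd_comm]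
    simp only [hp.coprime_iff_not_dvd, ite_not]
  have hremove : stickelbergerSum (p * (2 * h)) (fun a ↦ f a * J(a | p) ^ 2) =
      stickelbergerSum (p * (2 * h)) f -
        ∑ i ∈ range (p * (2 * h)) with p ∣ i, f i * ((i : ℤ) ^ 2 - (p * (2 * h) : ℕ) * i) := by
    rw [stickelbergerSum_apply, stickelbergerSum_apply, sum_filter, ← sum_sub_distrib]
    refine sum_congr rfl fun i _ ↦ ?_
    rw [hdvd]
    split_ifs <;> ring
  have hmultiples : ∑ i ∈ range (p * (2 * h)) with p ∣ i,
      f i * ((i : ℤ) ^ 2 - (p * (2 * h) : ℕ) * i) = p ^ 2 * f p * stickelbergerSum (2 * h) f := by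
    rw [sum_range_mul_filter_dvd hp.pos, stickelbergerSum_apply, mul_sum]
    refine sum_congr rfl fun a _ ↦ ?_
    rw [Nat.cast_mul, hmul]
    push_cast
    ring
  rw [hremove, hmultiples, stickelbergerSum_mul_of_periodic (mod_cast hf.periodic_two_mul)
    (sum_range_two_mul_of_antiperiodic hf)]
  ring

theorem antiperiodic_mul_jacobiSym_sq {f : ℤ → ℤ} {h N : ℕ} (hf : Antiperiodic f h) (hN : Odd N) :
    Antiperiodic (fun a ↦ f a * J(a | N) ^ 2) (N * h : ℕ) := by
  intro a
  obtain ⟨k, rfl⟩ := hN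
  have hfa : f (a + ((2 * k + 1) * h : ℕ)) = -f a := by
    simpa using hf.odd_nsmul_antiperiodic k a
  have hJ := jacobiSym_periodic (dvd_mul_right (2 * k + 1) h) a
  simp only [hfa, hJ, neg_mul]

theorem stickelbergerSum_mul_jacobiSym_sq {f : ℤ → ℤ} {h N : ℕ} (hf : Antiperiodic f h)
    (hmul : ∀ a b, f (a * b) = f a * f b) (hN : Odd N) :
    stickelbergerSum (N * (2 * h)) (fun a ↦ f a * J(a | N) ^ 2) =
      N * (∏ p ∈ N.primeFactors, (1 - p * f p)) * stickelbergerSum (2 * h) f := by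
  induction N using induction_on_primes with
  | zero => exact absurd hN (by decide)
  | one => simp
  | prime_mul p N hp ih =>
    obtain ⟨-, hN⟩ := Nat.odd_mul.1 hN
    have hN0 : N ≠ 0 := hN.pos.ne'
    have hsplit : (fun a ↦ f a * J(a | p * N) ^ 2) =
        fun a ↦ f a * J(a | N) ^ 2 * J(a | p) ^ 2 := by
      funext a
      rw [jacobiSym.mul_right' a hp.ne_zero hN0]
      ring
    have hprod : (1 - p * (f p * J(p | N) ^ 2)) * ∏ q ∈ N.primeFactors, (1 - q * f q) =
        ∏ q ∈ (p * N).primeFactors, (1 - q * f q) := by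
      rw [Nat.primeFactors_mul hp.ne_zero hN0, hp.primeFactors, ← insert_eq,
        jacobiSym_sq_eq_ite _ hN0, Int.gcd_natCast_natCast]
      by_cases hpN : p ∣ N
      · rw [insert_eq_of_mem (hp.mem_primeFactors hpN hN0),
          if_neg (mt hp.coprime_iff_not_dvd.1 (not_not.2 hpN))]
        ring
      · rw [prod_insert (mt Nat.dvd_of_mem_primeFactors hpN),
          if_pos (hp.coprime_iff_not_dvd.2 hpN), mul_one]
    rw [hsplit, show p * N * (2 * h) = p * (2 * (N * h)) by ring,
      stickelbergerSum_mul_jacobiSym_sq_prime (antiperiodic_mul_jacobiSym_sq hf hN) hp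
        (fun a ↦ by rw [hmul, jacobiSym.mul_left]; ring),
      show 2 * (N * h) = N * (2 * h) by ring, ih hN, ← hprod]
    push_cast
    ring

/-- The function `a ↦ χ₄(a) J(a | d)`. For squarefree `d ≡ 3 (mod 4)` it is the quadratic character
of conductor `4d` attached to `ℚ(√d)`. -/
def chiFourJacobi (d : ℕ) (a : ℤ) : ℤ := χ₄ a * J(a | d)

theorem chiFourJacobi_mul (d : ℕ) (a b : ℤ) :
    chiFourJacobi d (a * b) = chiFourJacobi d a * chiFourJacobi d b := by
  simp only [chiFourJacobi, Int.cast_mul, map_mul, jacobiSym.mul_left]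
  ring

theorem χ₄_antiperiodic_two_mul {n : ℕ} (hn : Odd n) :
    Antiperiodic (fun a : ℤ ↦ χ₄ a) (2 * n : ℕ) := by
  intro a
  rw [Nat.odd_iff] at hn
  simp only [χ₄_int_eq_if_mod_four]
  split_ifs <;> omega

theorem chiFourJacobi_antiperiodic {d : ℕ} (hd : Odd d) :
    Antiperiodic (chiFourJacobi d) (2 * d : ℕ) := by
  intro a
  have hJ := jacobiSym_periodic (dvd_mul_left d 2) a
  simp only [chiFourJacobi, χ₄_antiperiodic_two_mul hd a, hJ, neg_mul]

theorem odd_chiFourJacobi {d p : ℕ} (hp : Odd p) (hpd : p.Coprime d) :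
    Odd (chiFourJacobi d p) := by
  have hχ : Odd (χ₄ (p : ℤ)) := by
    rw [Nat.odd_iff] at hp
    rw [χ₄_int_eq_if_mod_four]
    split_ifs <;> first | omega | decide
  have hJ : Odd J(p | d) := by
    have hgcd : (p : ℤ).gcd d = 1 := hpd
    rcases jacobiSym.eq_one_or_neg_one hgcd with h | h <;> rw [h] <;> decide
  exact hχ.mul hJ

theorem two_pow_dvd_stickelbergerSum_mul {d N k : ℕ} (hd : Odd d) (hN : Odd N)
    (h : 2 ^ (#d.primeFactors + k) ∣ stickelbergerSum (4 * d) (chiFourJacobi d)) :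
    2 ^ (#(d * N).primeFactors + k) ∣
      stickelbergerSum (4 * (d * N)) fun a ↦ chiFourJacobi d a * J(a | N) ^ 2 := by
  have heuler : stickelbergerSum (4 * (d * N)) (fun a ↦ chiFourJacobi d a * J(a | N) ^ 2) =
      N * (∏ p ∈ N.primeFactors, (1 - p * chiFourJacobi d p)) *
        stickelbergerSum (4 * d) (chiFourJacobi d) := by
    rw [show 4 * (d * N) = N * (2 * (2 * d)) by ring, show 4 * d = 2 * (2 * d) by ring]
    exact stickelbergerSum_mul_jacobiSym_sq (chiFourJacobi_antiperiodic hd) (chiFourJacobi_mul d) hN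
  have heven : ∀ p ∈ N.primeFactors \ d.primeFactors, (2 : ℤ) ∣ 1 - p * chiFourJacobi d p := by
    intro p hp
    obtain ⟨hpN, hpd⟩ := mem_sdiff.1 hp
    have hprime := Nat.prime_of_mem_primeFactors hpN
    have hodd : Odd p := hN.of_dvd_nat (Nat.dvd_of_mem_primeFactors hpN)
    have hcop : p.Coprime d := hprime.coprime_iff_not_dvd.2 fun hdvd ↦
      hpd (hprime.mem_primeFactors hdvd hd.pos.ne')
    exact (odd_one.sub_odd ((mod_cast hodd : Odd (p : ℤ)).mul
      (odd_chiFourJacobi hodd hcop))).two_dvd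
  have hpow : (2 : ℤ) ^ #(N.primeFactors \ d.primeFactors) ∣
      ∏ p ∈ N.primeFactors, (1 - p * chiFourJacobi d p) := by
    rw [← prod_const]
    exact (prod_dvd_prod_of_dvd _ _ heven).trans (prod_dvd_prod_of_subset _ _ _ sdiff_subset)
  have hcard : #(d * N).primeFactors + k =
      #(N.primeFactors \ d.primeFactors) + (#d.primeFactors + k) := by
    rw [Nat.primeFactors_mul hd.pos.ne' hN.pos.ne', union_comm, ← card_sdiff_add_card]
    ring
  rw [heuler, hcard, pow_add]
  exact mul_dvd_mul (hpow.mul_left _) h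

theorem sum_range_two_mul_eq_sum_Icc_of_even_eq_zero {M : Type*} [AddCommMonoid M] {g : ℤ → M}
    (hg : ∀ a, Even a → g a = 0) (h : ℕ) :
    ∑ a ∈ range (2 * (2 * h + 1)), g a = ∑ j ∈ Icc (-h : ℤ) h, g (2 * h + 1 + 2 * j) := by
  have hfilter : ∑ a ∈ range (2 * (2 * h + 1)), g a =
      ∑ a ∈ range (2 * (2 * h + 1)) with Odd a, g a :=
    (sum_filter_of_ne fun a _ ha ↦ by
      rw [← Nat.not_even_iff_odd]; exact mt (fun h ↦ hg a (mod_cast h)) ha).symm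
  rw [hfilter]
  refine sum_nbij' (fun a ↦ ((a : ℤ) - (2 * h + 1)) / 2) (fun j ↦ (2 * h + 1 + 2 * j).toNat)
    ?_ ?_ ?_ ?_ ?_
  all_goals simp only [mem_filter, mem_range, mem_Icc, Nat.odd_iff]
  case refine_5 => intro a ha; congr 1; omega
  all_goals omega

theorem stickelbergerSum_χ₄_mul {F : ℤ → ℤ} {h : ℕ} (hper : Periodic F (2 * h + 1 : ℕ))
    (hodd : Function.Odd F) :
    stickelbergerSum (4 * (2 * h + 1)) (fun a ↦ χ₄ a * F a) =
      -16 * (2 * h + 1) * ∑ j ∈ range (h + 1), χ₄ (2 * h + 1 + 2 * j : ℤ) * (j * F (2 * j)) := by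
  have hanti : Antiperiodic (fun a : ℤ ↦ χ₄ a * F a) (2 * (2 * h + 1) : ℕ) := fun a ↦ by
    have hF : F (a + (2 * (2 * h + 1) : ℕ)) = F a := by exact_mod_cast hper.nat_mul 2 a
    have hχ := χ₄_antiperiodic_two_mul ⟨h, rfl⟩ a
    simp only at hχ
    simp only [hχ, hF, neg_mul]
  have hterm (j : ℤ) : χ₄ (2 * h + 1 + 2 * j : ℤ) * F (2 * h + 1 + 2 * j) *
      ((2 * (2 * h + 1) : ℕ) - 2 * (2 * h + 1 + 2 * j)) =
      -4 * (χ₄ (2 * h + 1 + 2 * j : ℤ) * (j * F (2 * j))) := by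
    have hF : F (2 * h + 1 + 2 * j) = F (2 * j) := by
      rw [add_comm]; exact_mod_cast hper (2 * j)
    rw [hF]
    push_cast
    ring
  have heven : Function.Even fun j : ℤ ↦ χ₄ (2 * h + 1 + 2 * j : ℤ) * (j * F (2 * j)) := by
    intro j
    have hχ : χ₄ (2 * h + 1 + 2 * -j : ℤ) = χ₄ (2 * h + 1 + 2 * j : ℤ) := by
      rw [χ₄_int_mod_four, χ₄_int_mod_four (2 * h + 1 + 2 * j)]; congr 2; omega
    have hF : F (2 * -j) = -F (2 * j) := by rw [mul_neg, hodd]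
    beta_reduce
    rw [hχ, hF, neg_mul_neg]
  have hzero (a : ℤ) (ha : Even a) :
      χ₄ a * F a * ((2 * (2 * h + 1) : ℕ) - 2 * a) = 0 := by
    rw [χ₄_int_eq_if_mod_four, if_pos (Int.even_iff.1 ha), zero_mul, zero_mul]
  rw [show 4 * (2 * h + 1) = 2 * (2 * (2 * h + 1)) by ring,
    stickelbergerSum_two_mul_of_antiperiodic hanti,
    sum_range_two_mul_eq_sum_Icc_of_even_eq_zero hzero]
  simp only [hterm, ← mul_sum, sum_Icc_of_even_eq_range heven]
  push_cast
  ring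

theorem sixteen_mul_dvd_stickelbergerSum_χ₄_mul {F : ℤ → ℤ} {n : ℕ} {c q : ℤ} (hn : Odd n)
    (hper : Periodic F n) (hodd : Function.Odd F) (hq : ∀ a, q ∣ c * F a) :
    16 * q ∣ c * stickelbergerSum (4 * n) (fun a ↦ χ₄ a * F a) := by
  obtain ⟨h, rfl⟩ := hn
  have hsum : q ∣ ∑ j ∈ range (h + 1), χ₄ (2 * h + 1 + 2 * j : ℤ) * (j * (c * F (2 * j))) :=
    dvd_sum fun j _ ↦ ((hq _).mul_left _).mul_left _
  simp only [mul_left_comm _ c, ← mul_sum] at hsum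
  rw [stickelbergerSum_χ₄_mul hper hodd, mul_left_comm]
  exact mul_dvd_mul ((dvd_neg.2 dvd_rfl).mul_right _) hsum

theorem sum_range_comp_two_mul {M : Type*} [AddCommMonoid M] (u : ℤ → M) (h : ℕ) :
    ∑ j ∈ range (h + 1), u (2 * j) =
      ∑ j ∈ range (h + 1), if Odd j then u (2 * h + 1 - j) else u j := by
  -- For `h < 2 * j` the index `2 * j` is replaced by its reflection, the odd number `2h + 1 - 2j`.
  refine sum_nbij' (fun j ↦ if 2 * j ≤ h then 2 * j else 2 * h + 1 - 2 * j)
    (fun j ↦ if Odd j then (2 * h + 1 - j) / 2 else j / 2) ?_ ?_ ?_ ?_ ?_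
  all_goals simp only [mem_range, Nat.odd_iff]
  case refine_5 =>
    intro j hj
    split_ifs
    · omega
    · congr 1
    · congr 1; omega
    · omega
  all_goals intro j hj; split_ifs <;> omega

theorem sum_range_mul_eq_zero_of_two_mul_invariant {F : ℤ → ℤ} {h : ℕ}
    (hper : Periodic F (2 * h + 1 : ℕ)) (hodd : Function.Odd F) (hdouble : ∀ a, F (2 * a) = F a) :
    ∑ j ∈ range (h + 1), j * F j = 0 := by
  have hreflect (j : ℤ) : F (2 * h + 1 - j) = -F j := by
    rw [← hodd, sub_eq_add_neg, add_comm]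
    exact_mod_cast hper (-j)
  have hodd_sum : ∑ j ∈ range (h + 1) with Odd j, F j = 0 := by
    have hsum := sum_range_comp_two_mul F h
    simp only [hdouble, hreflect, sum_ite, sum_neg_distrib] at hsum
    rw [← sum_filter_add_sum_filter_not _ (fun j ↦ Odd j)] at hsum
    linarith
  have hdoubled : ∑ j ∈ range (h + 1), 2 * (j * F j) = ∑ j ∈ range (h + 1), j * F j := calc
    _ = ∑ j ∈ range (h + 1), if Odd j then (2 * h + 1 - j) * F (2 * h + 1 - j) else j * F j := by
      rw [← sum_range_comp_two_mul (fun x ↦ x * F x)]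
      simp only [hdouble, mul_assoc]
    _ = ∑ j ∈ range (h + 1), j * F j -
        (2 * h + 1) * ∑ j ∈ range (h + 1) with Odd j, F j := by
      rw [mul_sum, sum_filter, ← sum_sub_distrib]
      refine sum_congr rfl fun j _ ↦ ?_
      rw [hreflect]
      split_ifs <;> ring
    _ = _ := by rw [hodd_sum, mul_zero, sub_zero]
  rw [← mul_sum] at hdoubled
  linarith

theorem sixty_four_mul_dvd_stickelbergerSum_χ₄_mul {F : ℤ → ℤ} {n : ℕ} {c q : ℤ} (hn : Odd n)
    (hper : Periodic F n) (hodd : Function.Odd F) (hdouble : ∀ a, F (2 * a) = F a)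
    (hq : ∀ a, q ∣ c * F a) : 64 * q ∣ c * stickelbergerSum (4 * n) (fun a ↦ χ₄ a * F a) := by
  obtain ⟨h, rfl⟩ := hn
  have hχ (j : ℕ) : χ₄ (2 * h + 1 + 2 * j : ℤ) = χ₄ (2 * h + 1 : ℤ) * (-1) ^ j := by
    have hanti : Antiperiodic (fun a : ℤ ↦ χ₄ a) 2 := χ₄_antiperiodic_two_mul odd_one
    simpa only [mul_comm] using hanti.add_nat_mul_eq (x := (2 * h + 1 : ℤ)) j
  have hterm (j : ℕ) : χ₄ (2 * h + 1 + 2 * j : ℤ) * (j * F (2 * j)) =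
      χ₄ (2 * h + 1 : ℤ) * (((-1) ^ j + 1) * j * F j - j * F j) := by
    rw [hχ, hdouble]
    ring
  have hfour (j : ℕ) : (4 : ℤ) ∣ ((-1) ^ j + 1) * j := by
    rcases j.even_or_odd with hj | hj
    · rw [hj.neg_one_pow]
      exact mul_dvd_mul (by rfl) (Int.natCast_dvd_natCast.2 hj.two_dvd)
    · simp [hj.neg_one_pow]
  rw [stickelbergerSum_χ₄_mul hper hodd]
  simp only [hterm, ← mul_sum, sum_sub_distrib,
    sum_range_mul_eq_zero_of_two_mul_invariant hper hodd hdouble, sub_zero]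
  have hsum : 4 * q ∣ ∑ j ∈ range (h + 1), ((-1) ^ j + 1) * (j : ℤ) * (c * F j) :=
    dvd_sum fun j _ ↦ mul_dvd_mul (hfour j) (hq j)
  simp only [mul_left_comm _ c, ← mul_sum] at hsum
  obtain ⟨b, hb⟩ := hsum
  exact ⟨-(2 * h + 1) * χ₄ (2 * h + 1 : ℤ) * b,
    by linear_combination -16 * (2 * h + 1) * χ₄ (2 * h + 1 : ℤ) * hb⟩

/-- The Dirichlet character modulo `x.1 * x.2` induced by the Jacobi symbol modulo `x.1`; the
factor `J(a | x.2) ^ 2` is the principal character modulo `x.2`. -/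
def imprimitiveJacobi (x : ℕ × ℕ) (a : ℤ) : ℤ := J(a | x.1) * J(a | x.2) ^ 2

theorem imprimitiveJacobi_periodic {n : ℕ} {x : ℕ × ℕ} (hx : x ∈ n.divisorsAntidiagonal) :
    Periodic (imprimitiveJacobi x) (n : ℤ) := fun a ↦ by
  have hn := (Nat.mem_divisorsAntidiagonal.1 hx).1
  have h₁ := jacobiSym_periodic (Dvd.intro _ hn) a
  have h₂ := jacobiSym_periodic (Dvd.intro_left _ hn) a
  simp only [imprimitiveJacobi, h₁, h₂]

theorem imprimitiveJacobi_neg {x : ℕ × ℕ} (hx : Odd x.1) (a : ℤ) :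
    imprimitiveJacobi x (-a) = χ₄ x.1 * imprimitiveJacobi x a := by
  have hunit : J(-1 | x.2) ^ 2 = 1 := jacobiSym.sq_one (by simp)
  rw [imprimitiveJacobi, imprimitiveJacobi, jacobiSym.neg a hx, ← neg_one_mul a,
    jacobiSym.mul_left (-1) a x.2]
  linear_combination χ₄ x.1 * J(a | x.1) * J(a | x.2) ^ 2 * hunit

theorem imprimitiveJacobi_two_mul {x : ℕ × ℕ} (h₁ : Odd x.1) (h₂ : Odd x.2) (a : ℤ) :
    imprimitiveJacobi x (2 * a) = χ₈ x.1 * imprimitiveJacobi x a := by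
  have hunit : J(2 | x.2) ^ 2 = 1 := jacobiSym.sq_one (Nat.coprime_two_left.2 h₂)
  rw [imprimitiveJacobi, imprimitiveJacobi, jacobiSym.mul_left, jacobiSym.mul_left,
    jacobiSym.at_two h₁]
  linear_combination χ₈ x.1 * J(a | x.1) * J(a | x.2) ^ 2 * hunit

theorem sum_divisorsAntidiagonal_imprimitiveJacobi {n : ℕ} (hn : Squarefree n) (a : ℤ) :
    ∑ x ∈ n.divisorsAntidiagonal, imprimitiveJacobi x a =
      ∏ p ∈ n.primeFactors, (J(a | p) + J(a | p) ^ 2) := by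
  let jacobi : ArithmeticFunction ℤ := ⟨fun d ↦ if d = 0 then 0 else J(a | d), if_pos rfl⟩
  have hjacobi (d : ℕ) (hd : d ≠ 0) : jacobi d = J(a | d) := if_neg hd
  have hmul : jacobi.IsMultiplicative := by
    refine ArithmeticFunction.IsMultiplicative.iff_ne_zero.2
      ⟨by simp [jacobi], fun {d e} hd he _ ↦ ?_⟩
    rw [hjacobi _ hd, hjacobi _ he, hjacobi _ (mul_ne_zero hd he), jacobiSym.mul_right' a hd he]
  have hconv := hmul.prodPrimeFactors_add_of_squarefree (hmul.pmul hmul) hn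
  rw [ArithmeticFunction.prodPrimeFactors_apply hn.ne_zero, ArithmeticFunction.mul_apply] at hconv
  refine Eq.trans (sum_congr rfl fun x hx ↦ ?_) (hconv.symm.trans (prod_congr rfl fun p hp ↦ ?_))
  · obtain ⟨h₁, h₂⟩ := Nat.ne_zero_of_mem_divisorsAntidiagonal hx
    rw [ArithmeticFunction.pmul_apply, hjacobi _ h₁, hjacobi _ h₂, imprimitiveJacobi, sq]
  · have hp0 := (Nat.prime_of_mem_primeFactors hp).ne_zero
    rw [ArithmeticFunction.add_apply, ArithmeticFunction.pmul_apply, hjacobi p hp0, sq]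

theorem two_pow_dvd_sum_imprimitiveJacobi {n : ℕ} (hn : Squarefree n) (a : ℤ) :
    2 ^ #n.primeFactors ∣ ∑ x ∈ n.divisorsAntidiagonal, imprimitiveJacobi x a := by
  rw [sum_divisorsAntidiagonal_imprimitiveJacobi hn, ← prod_const]
  refine prod_dvd_prod_of_dvd _ _ fun p _ ↦ ?_
  rw [sq, ← mul_one_add]
  exact (Int.even_mul_succ_self _).two_dvd.trans (by rw [add_comm])

theorem stickelbergerSum_χ₄_mul_sum (N : ℕ) (s : Finset (ℕ × ℕ)) :
    stickelbergerSum N (fun a ↦ χ₄ a * ∑ x ∈ s, imprimitiveJacobi x a) =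
      ∑ x ∈ s, stickelbergerSum N fun a ↦ chiFourJacobi x.1 a * J(a | x.2) ^ 2 := by
  rw [← map_sum]
  congr 1
  funext a
  simp only [Finset.sum_apply, mul_sum, imprimitiveJacobi, chiFourJacobi, mul_assoc]

theorem odd_of_mem_divisorsAntidiagonal {n : ℕ} (hn : Odd n) {x : ℕ × ℕ}
    (hx : x ∈ n.divisorsAntidiagonal) : Odd x.1 ∧ Odd x.2 :=
  Nat.odd_mul.1 <| (Nat.mem_divisorsAntidiagonal.1 hx).1.symm ▸ hn

theorem sum_imprimitiveJacobi_odd {s : Finset (ℕ × ℕ)} (hs : ∀ x ∈ s, x.1 % 4 = 3) :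
    Function.Odd fun a ↦ ∑ x ∈ s, imprimitiveJacobi x a := fun a ↦ by
  rw [← sum_neg_distrib]
  refine sum_congr rfl fun x hx ↦ ?_
  rw [imprimitiveJacobi_neg (Nat.odd_iff.2 (Nat.odd_of_mod_four_eq_three (hs x hx))),
    χ₄_nat_three_mod_four (hs x hx), neg_one_mul]

theorem sum_imprimitiveJacobi_periodic {n : ℕ} {s : Finset (ℕ × ℕ)}
    (hs : s ⊆ n.divisorsAntidiagonal) :
    Periodic (fun a ↦ ∑ x ∈ s, imprimitiveJacobi x a) (n : ℤ) := fun a ↦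
  sum_congr rfl fun _ hx ↦ imprimitiveJacobi_periodic (hs hx) a

theorem two_pow_dvd_sum_stickelbergerSum_mod_four_eq_three {n : ℕ} (hn : Odd n)
    (hsf : Squarefree n) :
    2 ^ (#n.primeFactors + 3) ∣ ∑ x ∈ n.divisorsAntidiagonal with x.1 % 4 = 3,
      stickelbergerSum (4 * n) fun a ↦ chiFourJacobi x.1 a * J(a | x.2) ^ 2 := by
  have hsum (a : ℤ) : 2 * ∑ x ∈ n.divisorsAntidiagonal with x.1 % 4 = 3, imprimitiveJacobi x a =
      ∑ x ∈ n.divisorsAntidiagonal, imprimitiveJacobi x a -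
        ∑ x ∈ n.divisorsAntidiagonal, imprimitiveJacobi x (-a) := by
    rw [mul_sum, sum_filter, ← sum_sub_distrib]
    refine sum_congr rfl fun x hx ↦ ?_
    have hx₁ := (odd_of_mem_divisorsAntidiagonal hn hx).1
    rw [imprimitiveJacobi_neg hx₁]
    rcases Nat.odd_mod_four_iff.1 (Nat.odd_iff.1 hx₁) with h | h
    · rw [if_neg (by omega), χ₄_nat_one_mod_four h]
      ring
    · rw [if_pos h, χ₄_nat_three_mod_four h]
      ring
  have hdvd := sixteen_mul_dvd_stickelbergerSum_χ₄_mul hn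
    (sum_imprimitiveJacobi_periodic (filter_subset _ _))
    (sum_imprimitiveJacobi_odd fun x hx ↦ (mem_filter.1 hx).2)
    fun a ↦ hsum a ▸ dvd_sub (two_pow_dvd_sum_imprimitiveJacobi hsf a)
      (two_pow_dvd_sum_imprimitiveJacobi hsf (-a))
  rw [stickelbergerSum_χ₄_mul_sum] at hdvd
  refine Int.dvd_of_mul_dvd_mul_left two_ne_zero (Eq.dvd ?_ |>.trans hdvd)
  ring

theorem two_pow_dvd_sum_stickelbergerSum_mod_eight_eq_seven {n : ℕ} (hn : Odd n)
    (hsf : Squarefree n) :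
    2 ^ (#n.primeFactors + 4) ∣ ∑ x ∈ n.divisorsAntidiagonal with x.1 % 8 = 7,
      stickelbergerSum (4 * n) fun a ↦ chiFourJacobi x.1 a * J(a | x.2) ^ 2 := by
  set G : ℤ → ℤ := fun a ↦ ∑ x ∈ n.divisorsAntidiagonal, imprimitiveJacobi x a with hG
  have hGdvd : ∀ a, 2 ^ #n.primeFactors ∣ G a := two_pow_dvd_sum_imprimitiveJacobi hsf
  have hsum (a : ℤ) : 4 * ∑ x ∈ n.divisorsAntidiagonal with x.1 % 8 = 7, imprimitiveJacobi x a =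
      G a - G (-a) + (G (2 * a) - G (2 * -a)) := by
    simp only [hG]
    rw [mul_sum, sum_filter, ← sum_sub_distrib, ← sum_sub_distrib, ← sum_add_distrib]
    refine sum_congr rfl fun x hx ↦ ?_
    obtain ⟨hx₁, hx₂⟩ := odd_of_mem_divisorsAntidiagonal hn hx
    rw [imprimitiveJacobi_two_mul hx₁ hx₂, imprimitiveJacobi_two_mul hx₁ hx₂,
      imprimitiveJacobi_neg hx₁, χ₄_nat_eq_if_mod_four, χ₈_nat_eq_if_mod_eight]
    rw [Nat.odd_iff] at hx₁
    split_ifs <;> omega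
  have hdouble (a : ℤ) :
      ∑ x ∈ n.divisorsAntidiagonal with x.1 % 8 = 7, imprimitiveJacobi x (2 * a) =
        ∑ x ∈ n.divisorsAntidiagonal with x.1 % 8 = 7, imprimitiveJacobi x a := by
    refine sum_congr rfl fun x hx ↦ ?_
    obtain ⟨hx, hx8⟩ := mem_filter.1 hx
    obtain ⟨hx₁, hx₂⟩ := odd_of_mem_divisorsAntidiagonal hn hx
    have hχ : χ₈ x.1 = 1 := by rw [χ₈_nat_mod_eight, hx8]; rfl
    rw [imprimitiveJacobi_two_mul hx₁ hx₂, hχ, one_mul]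
  have hdvd := sixty_four_mul_dvd_stickelbergerSum_χ₄_mul hn
    (sum_imprimitiveJacobi_periodic (filter_subset _ _))
    (sum_imprimitiveJacobi_odd fun x hx ↦ by have := (mem_filter.1 hx).2; omega) hdouble
    fun a ↦ hsum a ▸ ((hGdvd _).sub (hGdvd _)).add ((hGdvd _).sub (hGdvd _))
  rw [stickelbergerSum_χ₄_mul_sum] at hdvd
  refine Int.dvd_of_mul_dvd_mul_left four_ne_zero (Eq.dvd ?_ |>.trans hdvd)
  ring

theorem two_pow_dvd_stickelbergerSum_of_sum_divisorsAntidiagonal {P : ℕ → Prop}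
    [DecidablePred P] {k : ℕ}
    (hsum : ∀ n, Odd n → Squarefree n → 2 ^ (#n.primeFactors + k) ∣
      ∑ x ∈ n.divisorsAntidiagonal with P x.1,
        stickelbergerSum (4 * n) fun a ↦ chiFourJacobi x.1 a * J(a | x.2) ^ 2)
    {n : ℕ} (hn : Odd n) (hsf : Squarefree n) (hP : P n) :
    2 ^ (#n.primeFactors + k) ∣ stickelbergerSum (4 * n) (chiFourJacobi n) := by
  induction n using Nat.strong_induction_on with
  | h n ih =>
    have hmem : (n, 1) ∈ {x ∈ n.divisorsAntidiagonal | P x.1} := by simp [hP, hsf.ne_zero]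
    have hself : stickelbergerSum (4 * n) (chiFourJacobi n) =
        stickelbergerSum (4 * n) fun a ↦ chiFourJacobi n a * J(a | 1) ^ 2 := by simp
    have hproper : ∀ x ∈ {x ∈ n.divisorsAntidiagonal | P x.1}.erase (n, 1),
        2 ^ (#n.primeFactors + k) ∣
          stickelbergerSum (4 * n) fun a ↦ chiFourJacobi x.1 a * J(a | x.2) ^ 2 := by
      rintro ⟨d, e⟩ hx
      obtain ⟨hne, hx⟩ := mem_erase.1 hx
      obtain ⟨hx, hPd⟩ := mem_filter.1 hx
      obtain ⟨hd, he⟩ := odd_of_mem_divisorsAntidiagonal hn hx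
      obtain ⟨rfl, -⟩ := Nat.mem_divisorsAntidiagonal.1 hx
      have hlt : d < d * e := by
        refine lt_mul_of_one_lt_right hd.pos (Nat.one_lt_iff_ne_zero_and_ne_one.2 ⟨he.pos.ne', ?_⟩)
        rintro rfl
        exact hne (by rw [mul_one])
      exact two_pow_dvd_stickelbergerSum_mul hd he (ih d hlt hd hsf.of_mul_left hPd)
    have htotal := hsum n hn hsf
    rw [← add_sum_erase _ _ hmem] at htotal
    rw [hself]
    exact (dvd_add_left (dvd_sum hproper)).1 htotal

theorem two_pow_dvd_stickelbergerSum_of_squarefree {m k : ℕ} (hm : Odd m)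
    (h : ∀ n, Odd n → Squarefree n → n % 8 = m % 8 →
      2 ^ (#n.primeFactors + k) ∣ stickelbergerSum (4 * n) (chiFourJacobi n)) :
    2 ^ (#m.primeFactors + k) ∣ stickelbergerSum (4 * m) (chiFourJacobi m) := by
  obtain ⟨n, b, rfl, hsf⟩ := Nat.sq_mul_squarefree m
  obtain ⟨hb2, hn⟩ := Nat.odd_mul.1 hm
  have hb : Odd b := Nat.Odd.of_mul_left (sq b ▸ hb2)
  have hmod : n ≡ b ^ 2 * n [MOD 8] := by
    have hb8 : 1 ≡ b ^ 2 [MOD 8] :=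
      (Nat.modEq_iff_dvd' hb2.pos).2 (Nat.eight_dvd_sq_sub_one_of_odd hb)
    simpa only [one_mul] using hb8.mul_right n
  have hinduced : chiFourJacobi (b ^ 2 * n) = fun a ↦ chiFourJacobi n a * J(a | b ^ 2) ^ 2 := by
    funext a
    have hprincipal : J(a | b ^ 2) ^ 2 = J(a | b ^ 2) := by
      rw [jacobiSym.pow_right]
      rcases jacobiSym.trichotomy a b with h | h | h <;> rw [h] <;> rfl
    rw [hprincipal, chiFourJacobi, chiFourJacobi, jacobiSym.mul_right' a hb2.pos.ne' hn.pos.ne']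
    ring
  rw [hinduced, mul_comm]
  exact two_pow_dvd_stickelbergerSum_mul hn hb2 (h n hn hsf hmod)

theorem chiFourJacobi_natCast_of_odd {m a : ℕ} (hm : m % 4 = 3) (ha : Odd a) :
    chiFourJacobi m a = J(m | a) := by
  rw [chiFourJacobi, Int.cast_natCast]
  rcases Nat.odd_mod_four_iff.1 (Nat.odd_iff.1 ha) with h | h
  · rw [χ₄_nat_one_mod_four h, one_mul, jacobiSym.quadratic_reciprocity_one_mod_four h
      (Nat.odd_iff.2 (Nat.odd_of_mod_four_eq_three hm))]
  · rw [χ₄_nat_three_mod_four h, jacobiSym.quadratic_reciprocity_three_mod_four h hm, neg_one_mul,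
      neg_neg]

theorem chiFourJacobi_natCast_of_even (m : ℕ) {a : ℕ} (ha : Even a) : chiFourJacobi m a = 0 := by
  rw [chiFourJacobi, Int.cast_natCast, χ₄_nat_eq_if_mod_four, if_pos (Nat.even_iff.1 ha), zero_mul]

theorem sum_jacobiSym_eq_stickelbergerSum {m : ℕ} (hm : m % 4 = 3) :
    ∑ a ∈ Icc 1 (4 * m) with a % 2 = 1, J(m | a) * ((a : ℤ) ^ 2 - 4 * (m : ℤ) * a) =
      stickelbergerSum (4 * m) (chiFourJacobi m) := by
  have hfilter : {a ∈ Icc 1 (4 * m) | a % 2 = 1} = {a ∈ range (4 * m) | a % 2 = 1} := by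
    ext a
    simp only [mem_filter, mem_Icc, mem_range]
    omega
  rw [hfilter, sum_filter, stickelbergerSum_apply]
  refine sum_congr rfl fun a _ ↦ ?_
  split_ifs with ha
  · rw [chiFourJacobi_natCast_of_odd hm (Nat.odd_iff.2 ha)]
    push_cast
    rfl
  · rw [chiFourJacobi_natCast_of_even m (Nat.even_iff.2 (Nat.mod_two_ne_one.1 ha)), zero_mul]

theorem two_adic_dvd_quadratic_stickelberger_sum_general (m : ℕ) :
    (m % 8 = 7 →
      (2 : ℤ) ^ (m.primeFactors.card + 4) ∣
        ∑ a ∈ (Finset.Icc 1 (4 * m)).filter (fun a => a % 2 = 1),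
          jacobiSym (m : ℤ) a * ((a : ℤ) ^ 2 - 4 * (m : ℤ) * a)) ∧
    (m % 8 = 3 →
      (2 : ℤ) ^ (m.primeFactors.card + 3) ∣
        ∑ a ∈ (Finset.Icc 1 (4 * m)).filter (fun a => a % 2 = 1),
          jacobiSym (m : ℤ) a * ((a : ℤ) ^ 2 - 4 * (m : ℤ) * a)) := by
  refine ⟨fun hm8 ↦ ?_, fun hm8 ↦ ?_⟩
  all_goals
    have hm4 : m % 4 = 3 := by omega
    rw [sum_jacobiSym_eq_stickelbergerSum hm4]
    refine two_pow_dvd_stickelbergerSum_of_squarefree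
      (Nat.odd_iff.2 (Nat.odd_of_mod_four_eq_three hm4)) fun n hn hsf hmod ↦ ?_
  · exact two_pow_dvd_stickelbergerSum_of_sum_divisorsAntidiagonal (P := (· % 8 = 7))
      (fun _ ↦ two_pow_dvd_sum_stickelbergerSum_mod_eight_eq_seven) hn hsf (hmod.trans hm8)
  · exact two_pow_dvd_stickelbergerSum_of_sum_divisorsAntidiagonal (P := (· % 4 = 3))
      (fun _ ↦ two_pow_dvd_sum_stickelbergerSum_mod_four_eq_three) hn hsf (by omega)

end

/-- **2-adic divisibility of the Stickelberger sum of a real quadratic field.**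
Let `m ≥ 3` be squarefree with `m ≡ 3 (mod 4)`, with `t` prime divisors, and let
`S = ∑_a J(m|a)·(a² − 4m·a)` over the odd integers `1 ≤ a ≤ 4m` (Jacobi symbol).
Then `2^(t+4) ∣ S` if `m ≡ 7 (mod 8)`, and `2^(t+3) ∣ S` if `m ≡ 3 (mod 8)`. -/
theorem two_adic_dvd_quadratic_stickelberger_sum
    (m : ℕ) (hm : 3 ≤ m) (hsf : Squarefree m) (hm4 : m % 4 = 3) :
    (m % 8 = 7 →
      (2 : ℤ) ^ (m.primeFactors.card + 4) ∣
        ∑ a ∈ (Finset.Icc 1 (4 * m)).filter (fun a => a % 2 = 1),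
          jacobiSym (m : ℤ) a * ((a : ℤ) ^ 2 - 4 * (m : ℤ) * a)) ∧
    (m % 8 = 3 →
      (2 : ℤ) ^ (m.primeFactors.card + 3) ∣
        ∑ a ∈ (Finset.Icc 1 (4 * m)).filter (fun a => a % 2 = 1),
          jacobiSym (m : ℤ) a * ((a : ℤ) ^ 2 - 4 * (m : ℤ) * a)) :=
  two_adic_dvd_quadratic_stickelberger_sum_general m
end

section
/- The 2-Sylow subgroup of the ideal class group of K is isomorphic to (ℤ/2ℤ)^(n−1); in particular the 2-class group of K is elementary of 2-rank n − 1. -/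
open NumberField

/-!
Since `ℓ₁ ≡ 3 (mod 4)` ramifies in `K = ℚ(√m)`, the integer `-1` is not a norm from `K`. Hence a
class of order dividing two contains an ideal `I` with `I ^ 2 = (x)` and `N(x) = N(I) ^ 2`, and an
explicit form of Hilbert 90 turns it into a class generated by the ramified primes `𝔭`, `𝔩ᵢ`.
Two relations hold between these primes: `(√m)` is the product of the `𝔩ᵢ`, and the fundamental unit
`ε`, of norm `1` but not a square, yields a second one through `(ε + 1) ^ 2 = (2 Re ε + 2) ε`.

If the class of `𝔭 ^ e * ∏ i ∈ T, 𝔩ᵢ` is a square, then `± 2 ^ e * ∏ i ∈ T, ℓᵢ` is a norm from `K`,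
so its Jacobi symbols at the ramified primes are trivial. Taking `ℓ₁` out by the relation `(√m)`,
this leaves `T = ∅, e = 0` and `T = {2}, e = 1` only. The second relation is therefore
`𝔭 * 𝔩₂ ~ 1`, the classes of `𝔩₂, …, 𝔩ₙ` form a basis of the `2`-torsion, and no nontrivial
`2`-torsion class is a square, so the `2`-class group is elementary of rank `n - 1`.
-/

section ElementaryTwoGroup

variable {ι G : Type*} [CommGroup G] {c : ι → G}

/-- The homomorphism from the elementary abelian `2`-group on `ι` sending the basis vector at `i`
to the involution `c i`. -/
def involutionHom [Fintype ι] (c : ι → G) (hc : ∀ i, c i ^ 2 = 1) :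
    (ι → Multiplicative (ZMod 2)) →* G where
  toFun x := ∏ i, c i ^ (x i).toAdd.val
  map_one' := by simp
  map_mul' x y := by
    rw [← Finset.prod_mul_distrib]
    refine Finset.prod_congr rfl fun i _ ↦ ?_
    rw [Pi.mul_apply, toAdd_mul, ZMod.val_add, ← pow_add, ← pow_eq_pow_mod _ (hc i)]

lemma involutionHom_apply [Fintype ι] (hc : ∀ i, c i ^ 2 = 1) (x : ι → Multiplicative (ZMod 2)) :
    involutionHom c hc x = ∏ i with x i ≠ 1, c i := by
  rw [Finset.prod_filter]
  refine Finset.prod_congr rfl fun i _ ↦ ?_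
  obtain h | h : x i = 1 ∨ x i = Multiplicative.ofAdd 1 := by
    generalize x i = a
    revert a
    decide
  · simp [h]
  · rw [if_pos (by rw [h]; decide), h, toAdd_ofAdd, ZMod.val_one, pow_one]

lemma closure_le_range_involutionHom [Fintype ι] (hc : ∀ i, c i ^ 2 = 1) :
    Subgroup.closure (Set.range c) ≤ (involutionHom c hc).range := by
  classical
  rw [Subgroup.closure_le]
  rintro _ ⟨i, rfl⟩
  refine ⟨Pi.mulSingle i (Multiplicative.ofAdd 1), ?_⟩
  rw [involutionHom_apply, Finset.prod_eq_single i]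
  · intro j hj hji
    simp [Pi.mulSingle_eq_of_ne hji] at hj
  · intro hi
    exact absurd (Finset.mem_filter.2 ⟨Finset.mem_univ i, by rw [Pi.mulSingle_eq_same]; decide⟩) hi

lemma isPGroup_two_range_involutionHom [Fintype ι] (hc : ∀ i, c i ^ 2 = 1) :
    IsPGroup 2 (involutionHom c hc).range := by
  rintro ⟨_, x, rfl⟩
  have hx : x ^ 2 = 1 := funext fun i ↦ (by decide : ∀ a : Multiplicative (ZMod 2), a ^ 2 = 1) (x i)
  exact ⟨1, Subtype.ext (by simp [← map_pow, hx])⟩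

lemma sq_eq_one_of_pow_two_pow_eq_one {M : Type*} [Monoid M]
    (h : ∀ y : M, y ^ 4 = 1 → y ^ 2 = 1) : ∀ (k : ℕ) {y : M}, y ^ 2 ^ k = 1 → y ^ 2 = 1
  | 0, y, hy => by simp_all
  | k + 1, y, hy => by
    rw [pow_succ', pow_mul] at hy
    exact h y (by simpa [← pow_mul] using sq_eq_one_of_pow_two_pow_eq_one h k hy)

theorem nonempty_sylow_two_mulEquiv [Finite ι] (hc : ∀ i, c i ^ 2 = 1)
    (hspan : ∀ y : G, y ^ 2 = 1 → y ∈ Subgroup.closure (Set.range c))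
    (hindep : ∀ (y : G) (T : Finset ι), y ^ 2 * ∏ i ∈ T, c i = 1 → T = ∅) (S : Sylow 2 G) :
    Nonempty (S ≃* (ι → Multiplicative (ZMod 2))) := by
  have := Fintype.ofFinite ι
  have hinj : Function.Injective (involutionHom c hc) := by
    refine (injective_iff_map_eq_one _).2 fun x hx ↦ funext fun i ↦ ?_
    have hempty := hindep 1 (.filter (fun i ↦ x i ≠ 1) .univ) (by
      rw [one_pow, one_mul, ← involutionHom_apply hc, hx])
    simpa using Finset.filter_eq_empty_iff.1 hempty (Finset.mem_univ i)
  have hfour : ∀ y : G, y ^ 4 = 1 → y ^ 2 = 1 := by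
    intro y hy
    obtain ⟨x, hx⟩ := closure_le_range_involutionHom hc (hspan (y ^ 2) (by rwa [← pow_mul]))
    rw [involutionHom_apply] at hx
    have hempty := hindep y _ (by rw [hx, ← pow_add, hy])
    rw [← hx, hempty, Finset.prod_empty]
  have hrange : (involutionHom c hc).range = S := by
    refine S.is_maximal' (isPGroup_two_range_involutionHom hc) fun y hy ↦ ?_
    obtain ⟨k, hk⟩ := S.isPGroup' ⟨y, hy⟩
    exact closure_le_range_involutionHom hc <| hspan y <|
      sq_eq_one_of_pow_two_pow_eq_one hfour k (congrArg Subtype.val hk)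
  exact ⟨(MulEquiv.subgroupCongr hrange.symm).trans (MonoidHom.ofInjective hinj).symm⟩

end ElementaryTwoGroup

lemma forall_sylow_nonempty_mulEquiv_of_mulEquiv {p : ℕ} {G G' A : Type*} [Group G] [Group G']
    [Group A] (e : G ≃* G') (h : ∀ S : Sylow p G, Nonempty (S ≃* A)) (S : Sylow p G') :
    Nonempty (S ≃* A) := by
  have hS : (S : Subgroup G') ≤ e.toMonoidHom.range := fun y _ ↦ e.surjective y
  obtain ⟨f⟩ := h (S.comapOfInjective e.toMonoidHom e.injective hS)
  refine ⟨(MulEquiv.trans ?_ (e.subgroupMap _).symm).trans f⟩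
  exact MulEquiv.subgroupCongr (Subgroup.map_comap_eq_self hS).symm

section AmbiguousClasses

variable {R : Type*} [CommRing R] [IsDedekindDomain R]

open scoped nonZeroDivisors

/-- The ideal class `c` is the class of an ideal whose square is generated by the natural number
`s`. For a quadratic order these are the strongly ambiguous classes, the ideal being a rational
multiple of a product of ramified primes. -/
def IsAmbiguousClass (s : ℕ) (c : ClassGroup R) : Prop :=
  ∃ I : (Ideal R)⁰, ClassGroup.mk0 I = c ∧ (I : Ideal R) ^ 2 = Ideal.span {(s : R)}

lemma mem_nonZeroDivisors_of_sq_eq_span {x : R} (hx : x ≠ 0) {I : Ideal R}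
    (hI : I ^ 2 = Ideal.span {x}) : I ∈ (Ideal R)⁰ := by
  refine mem_nonZeroDivisors_of_ne_zero fun h ↦ hx ?_
  rwa [h, zero_pow two_ne_zero, eq_comm, Ideal.zero_eq_bot, Ideal.span_singleton_eq_bot] at hI

lemma exists_isAmbiguousClass_of_sq_eq_span {s : ℕ} (hs : (s : R) ≠ 0) {I : Ideal R}
    (hI : I ^ 2 = Ideal.span {(s : R)}) : ∃ c : ClassGroup R, IsAmbiguousClass s c :=
  ⟨_, ⟨I, mem_nonZeroDivisors_of_sq_eq_span hs hI⟩, rfl, hI⟩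

lemma exists_isAmbiguousClass_of_mem_span_pair_sq {s : ℕ} {w a b e : R} (hs : (s : R) ≠ 0)
    (hw : (s : R) ∣ w ^ 2) (h : (s : R) = a * s ^ 2 + b * (s * w) + e * w ^ 2) :
    ∃ c : ClassGroup R, IsAmbiguousClass s c := by
  refine exists_isAmbiguousClass_of_sq_eq_span hs (I := Ideal.span {(s : R), w}) ?_
  rw [sq, Ideal.span_pair_mul_span_pair]
  refine le_antisymm (Ideal.span_le.2 ?_) ?_
  · rintro _ (rfl | rfl | rfl | rfl) <;> rw [SetLike.mem_coe, Ideal.mem_span_singleton]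
    exacts [⟨_, rfl⟩, ⟨_, rfl⟩, ⟨_, mul_comm _ _⟩, sq w ▸ hw]
  · rw [Ideal.span_singleton_le_iff_mem]
    nth_rw 5 [h]
    rw [sq, sq]
    refine add_mem (add_mem ?_ ?_) ?_ <;>
      exact Ideal.mul_mem_left _ _ (Ideal.subset_span (by simp))

lemma isAmbiguousClass_inv_of_span_sq_eq {s : ℕ} (hs : (s : R) ≠ 0) {x : R} {I : (Ideal R)⁰}
    (h : Ideal.span {x} ^ 2 = (I : Ideal R) ^ 2 * Ideal.span {(s : R)}) :
    IsAmbiguousClass s (ClassGroup.mk0 I)⁻¹ := by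
  have hI : (I : Ideal R) ≠ 0 := nonZeroDivisors.coe_ne_zero I
  obtain ⟨J, hJ⟩ := (UniqueFactorizationMonoid.pow_dvd_pow_iff_dvd two_ne_zero).1 ⟨_, h⟩
  rw [hJ, mul_pow] at h
  have hJs : J ^ 2 = Ideal.span {(s : R)} := mul_left_cancel₀ (pow_ne_zero 2 hI) h
  refine ⟨⟨J, mem_nonZeroDivisors_of_sq_eq_span hs hJs⟩, ?_, hJs⟩
  rw [eq_inv_iff_mul_eq_one, ← map_mul, ClassGroup.mk0_eq_one_iff]
  exact ⟨x, by simp [hJ, mul_comm]⟩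

lemma isAmbiguousClass_one_of_span_sq_eq {s : ℕ} (hs : (s : R) ≠ 0) {x : R}
    (h : Ideal.span {x} ^ 2 = Ideal.span {(s : R)}) : IsAmbiguousClass s (1 : ClassGroup R) := by
  simpa using isAmbiguousClass_inv_of_span_sq_eq hs (x := x) (I := 1) (by
    rw [h, Submonoid.coe_one, one_pow, one_mul])

namespace IsAmbiguousClass

variable {s t : ℕ} {c c' : ClassGroup R}

lemma sq_eq_one (h : IsAmbiguousClass s c) : c ^ 2 = 1 := by
  obtain ⟨I, rfl, hI⟩ := h
  rw [← map_pow, ClassGroup.mk0_eq_one_iff]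
  exact ⟨s, by simpa using hI⟩

lemma eq (h : IsAmbiguousClass s c) (h' : IsAmbiguousClass s c') : c = c' := by
  obtain ⟨I, rfl, hI⟩ := h
  obtain ⟨J, rfl, hJ⟩ := h'
  exact congrArg _ (Subtype.ext (pow_left_injective two_ne_zero (hI.trans hJ.symm)))

lemma mul (h : IsAmbiguousClass s c) (h' : IsAmbiguousClass t c') :
    IsAmbiguousClass (s * t) (c * c') := by
  obtain ⟨I, rfl, hI⟩ := h
  obtain ⟨J, rfl, hJ⟩ := h'
  exact ⟨I * J, map_mul _ _ _, by
    simp [mul_pow, hI, hJ, Ideal.span_singleton_mul_span_singleton]⟩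

lemma one : IsAmbiguousClass 1 (1 : ClassGroup R) := ⟨1, map_one _, by simp⟩

lemma pow (h : IsAmbiguousClass s c) : ∀ k : ℕ, IsAmbiguousClass (s ^ k) (c ^ k)
  | 0 => by simpa using one
  | k + 1 => by simpa only [pow_succ] using (h.pow k).mul h

lemma prod {ι : Type*} {q : ι → ℕ} {C : ι → ClassGroup R} (h : ∀ i, IsAmbiguousClass (q i) (C i))
    (T : Finset ι) : IsAmbiguousClass (∏ i ∈ T, q i) (∏ i ∈ T, C i) := by
  classical
  induction T using Finset.induction_on with
  | empty => simpa using one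
  | insert i T hi ih => simpa only [Finset.prod_insert hi] using (h i).mul ih

lemma of_sq_mul {k : ℕ} (hs : (s : R) ≠ 0)
    (h : IsAmbiguousClass (k ^ 2 * s) c) : IsAmbiguousClass s c := by
  obtain ⟨I, rfl, hI⟩ := h
  have hinv : IsAmbiguousClass s (ClassGroup.mk0 I)⁻¹ := by
    refine isAmbiguousClass_inv_of_span_sq_eq (x := k * s) hs ?_
    simp only [hI, Ideal.span_singleton_pow, Ideal.span_singleton_mul_span_singleton]
    push_cast
    ring_nf
  have hsq : ClassGroup.mk0 I ^ 2 = 1 := sq_eq_one ⟨I, rfl, hI⟩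
  rwa [inv_eq_of_mul_eq_one_left ((sq _).symm.trans hsq)] at hinv

end IsAmbiguousClass

end AmbiguousClasses

section NormsModSquares

lemma intCast_dvd_of_mul_self_dvd_norm {p d : ℤ} (hp : Prime p) (hpd : p ∣ d) (hpd' : ¬ p * p ∣ d)
    {x : ℤ√d} (h : p * p ∣ x.norm) : (p : ℤ√d) ∣ x := by
  rw [Zsqrtd.norm_def, mul_assoc] at h
  have hre : p ∣ x.re := or_self_iff.1 <| hp.dvd_or_dvd <|
    (dvd_sub_left (hpd.mul_right _)).1 ((dvd_mul_right p p).trans h)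
  have him : p ∣ x.im := by
    obtain ⟨e, rfl⟩ := hpd
    have he : ¬ p ∣ e := fun he ↦ hpd' (mul_dvd_mul_left _ he)
    have := (dvd_sub_right (mul_dvd_mul hre hre)).1 h
    rw [mul_assoc, mul_dvd_mul_iff_left hp.ne_zero] at this
    exact or_self_iff.1 (hp.dvd_or_dvd ((hp.dvd_or_dvd this).resolve_left he))
  exact (Zsqrtd.intCast_dvd _ _).2 ⟨hre, him⟩

/-- The integer `c` is the norm of an element of `ℤ√d` up to a nonzero square, i.e. for
nonsquare `d` and `c ≠ 0`, it is the norm of an element of `ℚ(√d)`. -/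
def IsNormModSq (d c : ℤ) : Prop :=
  ∃ (x : ℤ√d) (z : ℤ), z ≠ 0 ∧ x.norm = c * z ^ 2

namespace IsNormModSq

variable {d c c' : ℤ}

lemma mul (h : IsNormModSq d c) (h' : IsNormModSq d c') : IsNormModSq d (c * c') := by
  obtain ⟨x, z, hz, hx⟩ := h
  obtain ⟨y, w, hw, hy⟩ := h'
  exact ⟨x * y, z * w, mul_ne_zero hz hw, by rw [Zsqrtd.norm_mul, hx, hy]; ring⟩

lemma neg_self (d : ℤ) : IsNormModSq d (-d) :=
  ⟨Zsqrtd.sqrtd, 1, one_ne_zero, by simp [Zsqrtd.norm_def]⟩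

lemma of_sq_mul {k : ℤ} (hk : k ≠ 0) (h : IsNormModSq d (k ^ 2 * c)) : IsNormModSq d c := by
  obtain ⟨x, z, hz, hx⟩ := h
  exact ⟨x, k * z, mul_ne_zero hk hz, by rw [hx]; ring⟩

lemma exists_not_dvd {p : ℤ} (hp : Prime p) (hpd : p ∣ d) (hpd' : ¬ p * p ∣ d)
    (h : IsNormModSq d c) : ∃ (x : ℤ√d) (z : ℤ), ¬ p ∣ z ∧ x.norm = c * z ^ 2 := by
  obtain ⟨x, z, hz, hx⟩ := h
  induction hn : z.natAbs using Nat.strong_induction_on generalizing x z with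
  | _ n ih =>
    by_cases hpz : p ∣ z
    · obtain ⟨z, rfl⟩ := hpz
      obtain ⟨y, rfl⟩ := intCast_dvd_of_mul_self_dvd_norm hp hpd hpd' (x := x)
        ⟨c * z ^ 2, by rw [hx]; ring⟩
      rw [mul_ne_zero_iff] at hz
      refine ih z.natAbs ?_ y z hz.2 ?_ rfl
      · rw [← hn, Int.natAbs_mul]
        exact lt_mul_of_one_lt_left (Int.natAbs_pos.2 hz.2) <|
          (Int.prime_iff_natAbs_prime.1 hp).one_lt
      · refine mul_left_cancel₀ (pow_ne_zero 2 hz.1) ?_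
        rw [Zsqrtd.norm_mul, Zsqrtd.norm_intCast] at hx
        linear_combination hx
    · exact ⟨x, z, hpz, hx⟩

lemma jacobiSym_eq_one {p : ℕ} (hp : p.Prime) (hpd : (p : ℤ) ∣ d) (hpd' : ¬ (p * p : ℤ) ∣ d)
    (hpc : ¬ (p : ℤ) ∣ c) (h : IsNormModSq d c) : jacobiSym c p = 1 := by
  have hp' : Prime (p : ℤ) := Nat.prime_iff_prime_int.1 hp
  obtain ⟨x, z, hz, hx⟩ := h.exists_not_dvd hp' hpd hpd'
  have coprime {a : ℤ} (ha : ¬ (p : ℤ) ∣ a) : a.gcd p = 1 := by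
    rw [Int.gcd_comm, ← Int.isCoprime_iff_gcd_eq_one, hp'.coprime_iff_not_dvd]
    exact ha
  have hmod : x.re ^ 2 ≡ c * z ^ 2 [ZMOD p] := by
    rw [Int.modEq_comm, Int.modEq_iff_dvd, ← hx, Zsqrtd.norm_def]
    exact (hpd.mul_right (x.im * x.im)).trans ⟨1, by ring⟩
  have hre : ¬ (p : ℤ) ∣ x.re := by
    intro hre
    have := hmod.dvd_iff.1 (dvd_pow hre two_ne_zero)
    rcases hp'.dvd_or_dvd this with h | h
    exacts [hpc h, hz (hp'.dvd_of_dvd_pow h)]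
  calc jacobiSym c p = jacobiSym (c * z ^ 2) p := by
        rw [jacobiSym.mul_left, jacobiSym.pow_left, jacobiSym.sq_one (coprime hz), mul_one]
    _ = jacobiSym (x.re ^ 2) p := jacobiSym.mod_left' hmod.symm
    _ = 1 := by rw [jacobiSym.pow_left, jacobiSym.sq_one (coprime hre)]

end IsNormModSq

lemma not_isNormModSq_neg_one_of_mod_four_eq_three {d : ℤ} {p : ℕ} (hp : p.Prime) (hp4 : p % 4 = 3)
    (hpd : (p : ℤ) ∣ d) (hpd' : ¬ (p * p : ℤ) ∣ d) : ¬ IsNormModSq d (-1) := by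
  intro h
  have hpos := h.jacobiSym_eq_one hp hpd hpd'
    (by simpa [Int.natCast_dvd] using hp.one_lt.ne')
  rw [jacobiSym.at_neg_one (Nat.odd_iff.2 (by lia)), ZMod.χ₄_nat_three_mod_four hp4] at hpos
  contradiction

lemma not_isSquare_of_not_isNormModSq_neg_one {d : ℤ} (hd0 : d ≠ 0) (hd : ¬ IsNormModSq d (-1)) :
    ¬ IsSquare d := by
  rintro ⟨k, rfl⟩
  exact hd ⟨⟨0, 1⟩, k, (mul_ne_zero_iff.1 hd0).1, by rw [Zsqrtd.norm_def]; ring⟩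

end NormsModSquares

section QuadraticOrder

variable {d : ℤ}

/-- The `ℤ`-basis `1, √d` of `ℤ√d`. -/
noncomputable def zsqrtdBasis (d : ℤ) : Module.Basis (Fin 2) ℤ (ℤ√d) :=
  .ofEquivFun
    { toFun := fun x ↦ ![x.re, x.im]
      invFun := fun v ↦ ⟨v 0, v 1⟩
      map_add' := fun x y ↦ by simp
      map_smul' := fun n x ↦ by simp
      left_inv := fun x ↦ rfl
      right_inv := fun v ↦ by ext i; fin_cases i <;> rfl }

instance : Module.Free ℤ (ℤ√d) := .of_basis (zsqrtdBasis d)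

instance : Module.Finite ℤ (ℤ√d) := .of_basis (zsqrtdBasis d)

lemma algebraNorm_zsqrtd (x : ℤ√d) : Algebra.norm ℤ x = x.norm := by
  have hrepr (y : ℤ√d) (i : Fin 2) : (zsqrtdBasis d).repr y i = ![y.re, y.im] i := rfl
  have hone : zsqrtdBasis d 0 = 1 := by
    refine (zsqrtdBasis d).apply_eq_iff.2 (Finsupp.ext fun i ↦ ?_)
    fin_cases i <;> simp [hrepr]
  have hsqrtd : zsqrtdBasis d 1 = Zsqrtd.sqrtd := by
    refine (zsqrtdBasis d).apply_eq_iff.2 (Finsupp.ext fun i ↦ ?_)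
    fin_cases i <;> simp [hrepr]
  rw [Algebra.norm_eq_matrix_det (zsqrtdBasis d), Matrix.det_fin_two]
  simp only [Algebra.leftMulMatrix_eq_repr_mul, hone, hsqrtd, hrepr]
  simp [Zsqrtd.norm_def]

lemma sq_add_intCast_of_norm_eq_sq {x : ℤ√d} {n : ℤ} (h : x.norm = n ^ 2) :
    (x + n) ^ 2 = x * (2 * (x.re + n) : ℤ) := by
  rw [Zsqrtd.norm_def] at h
  ext
  · simp only [sq, Zsqrtd.re_mul, Zsqrtd.re_add, Zsqrtd.im_add, Zsqrtd.re_intCast,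
      Zsqrtd.im_intCast]
    linear_combination -h
  · simp only [sq, Zsqrtd.im_mul, Zsqrtd.re_add, Zsqrtd.im_add, Zsqrtd.re_intCast,
      Zsqrtd.im_intCast]
    ring

lemma isRadical_intCast {p : ℤ} (hp : Prime p) (hpd : ¬ p ∣ 2 * d) : IsRadical (p : ℤ√d) := by
  refine (isRadical_iff_pow_one_lt 2 one_lt_two).2 fun x hx ↦ ?_
  obtain ⟨hp2, hpd⟩ : ¬ p ∣ 2 ∧ ¬ p ∣ d := by simpa [hp.dvd_mul] using hpd
  rw [Zsqrtd.intCast_dvd, sq, Zsqrtd.re_mul, Zsqrtd.im_mul] at hx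
  obtain ⟨hre, him⟩ := hx
  rw [Zsqrtd.intCast_dvd]
  have h : p ∣ x.re ∨ p ∣ x.im := by
    rw [← hp.dvd_mul]
    exact (hp.dvd_or_dvd (a := 2) (him.trans ⟨1, by ring⟩)).resolve_left hp2
  rw [mul_assoc] at hre
  rcases h with h | h
  · have := (dvd_add_right (h.mul_right x.re)).1 hre
    exact ⟨h, or_self_iff.1 (hp.dvd_or_dvd ((hp.dvd_or_dvd this).resolve_left hpd))⟩
  · have := (dvd_add_left ((h.mul_right x.im).mul_left d)).1 hre
    exact ⟨or_self_iff.1 (hp.dvd_or_dvd this), h⟩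

lemma not_isSquare_of_isFundamental {ε : Pell.Solution₁ d} (hε : Pell.IsFundamental ε)
    (hd : ¬ IsNormModSq d (-1)) : ¬ IsSquare (ε : ℤ√d) := by
  rintro ⟨η, hη⟩
  have hnorm : η.norm = 1 := by
    have hsq : η.norm * η.norm = 1 := by
      rw [← Zsqrtd.norm_mul, ← hη, Zsqrtd.norm_eq_one_iff_mem_unitary.2 ε.2]
    refine (mul_self_eq_one_iff.1 hsq).resolve_right fun hneg ↦ hd ⟨η, 1, one_ne_zero, ?_⟩
    rw [hneg, one_pow, mul_one]
  let η' : Pell.Solution₁ d := ⟨η, Zsqrtd.norm_eq_one_iff_mem_unitary.1 hnorm⟩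
  obtain ⟨n, hn⟩ : ∃ n : ℤ, η' * η' = ε ^ (n + n) := by
    obtain ⟨n, h | h⟩ := hε.eq_zpow_or_neg_zpow η'
    · exact ⟨n, by rw [h, zpow_add]⟩
    · exact ⟨n, by rw [h, zpow_add, neg_mul_neg]⟩
  have hone : ε ^ (n + n - 1) = 1 := by
    rw [zpow_sub_one, ← hn, mul_inv_eq_one]
    exact Subtype.ext hη.symm
  have := (hε.zpow_eq_one_iff _).1 hone
  lia

lemma isSquare_of_sq_eq_mul_sq {R : Type*} [CommRing R] [IsDomain R] [IsIntegrallyClosed R]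
    {a b u : R} (hb : b ≠ 0) (h : a ^ 2 = u * b ^ 2) : IsSquare u := by
  obtain ⟨c, rfl⟩ := (IsIntegrallyClosed.pow_dvd_pow_iff two_ne_zero).1 (Dvd.intro_left u h.symm)
  exact ⟨c, mul_right_cancel₀ (pow_ne_zero 2 hb) (by linear_combination -h)⟩

variable [IsDedekindDomain (ℤ√d)]

lemma absNorm_span_zsqrtd (x : ℤ√d) : Ideal.absNorm (Ideal.span {x}) = x.norm.natAbs := by
  rw [Ideal.absNorm_span_singleton, algebraNorm_zsqrtd]

lemma absNorm_eq_of_sq_eq_span {s : ℕ} {I : Ideal (ℤ√d)} (hI : I ^ 2 = Ideal.span {(s : ℤ√d)}) :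
    Ideal.absNorm I = s := by
  have h := congrArg Ideal.absNorm hI
  rw [map_pow, absNorm_span_zsqrtd, Zsqrtd.norm_natCast, ← sq, Int.natAbs_pow,
    Int.natAbs_natCast] at h
  exact Nat.pow_left_injective two_ne_zero h

namespace IsAmbiguousClass

variable {s : ℕ} {c : ClassGroup (ℤ√d)}

lemma exists_isNormModSq {y : ClassGroup (ℤ√d)} (h : IsAmbiguousClass s c) (hy : y ^ 2 * c = 1) :
    ∃ u : ℤˣ, IsNormModSq d (u * s) := by
  obtain ⟨I, rfl, hI⟩ := h
  obtain ⟨J, rfl⟩ := ClassGroup.mk0_surjective y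
  rw [← map_pow, ← map_mul, ClassGroup.mk0_eq_one_iff] at hy
  obtain ⟨x, hx⟩ := (Submodule.isPrincipal_iff _).1 hy
  have hnorm : x.norm.natAbs = Ideal.absNorm (J : Ideal (ℤ√d)) ^ 2 * s := by
    rw [← absNorm_span_zsqrtd, ← Ideal.submodule_span_eq, ← hx, ← absNorm_eq_of_sq_eq_span hI]
    simp
  have hJ : Ideal.absNorm (J : Ideal (ℤ√d)) ≠ 0 :=
    Ideal.absNorm_eq_zero_iff.not.2 (nonZeroDivisors.coe_ne_zero J)
  obtain ⟨u, hu⟩ := Int.natAbs_eq_iff_associated.1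
    ((Int.natAbs_natCast _).trans hnorm.symm)
  refine ⟨u, x, Ideal.absNorm (J : Ideal (ℤ√d)), by exact_mod_cast hJ, ?_⟩
  rw [← hu]
  push_cast
  ring

lemma prime_dvd_two_mul (hs : Squarefree s) (h : IsAmbiguousClass s c) {p : ℕ} (hp : p.Prime)
    (hps : p ∣ s) : (p : ℤ) ∣ 2 * d := by
  obtain ⟨I, rfl, hI⟩ := h
  by_contra hpd
  have hle : (I : Ideal (ℤ√d)) ≤ Ideal.span {(p : ℤ√d)} := by
    intro x hx
    refine Ideal.mem_span_singleton.2 (isRadical_intCast (Nat.prime_iff_prime_int.1 hp) hpd 2 x ?_)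
    have hx2 : x ^ 2 ∈ Ideal.span {(s : ℤ√d)} := hI ▸ Ideal.pow_mem_pow hx 2
    exact (Nat.cast_dvd_cast hps).trans (Ideal.mem_span_singleton.1 hx2)
  have hsq : Ideal.span {(s : ℤ√d)} ≤ Ideal.span {(p : ℤ√d) * p} := by
    rw [← hI, ← sq, ← Ideal.span_singleton_pow]
    exact Ideal.pow_right_mono hle 2
  rw [Ideal.span_singleton_le_span_singleton] at hsq
  have hpps : ((p * p : ℕ) : ℤ) ∣ (s : ℕ) :=
    (Zsqrtd.intCast_dvd_intCast (d := d) _ _).1 (by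
      simpa only [Int.cast_natCast, Int.cast_mul, Nat.cast_mul] using hsq)
  exact hp.not_isUnit (hs p (Int.natCast_dvd_natCast.1 hpps))

lemma dvd_two_mul_of_squarefree (hs : Squarefree s) (h : IsAmbiguousClass s c) :
    (s : ℤ) ∣ 2 * d := by
  rw [Int.natCast_dvd, ← Nat.prod_primeFactors_of_squarefree hs]
  refine Finset.prod_primes_dvd _ (fun p hp ↦ (Nat.prime_of_mem_primeFactors hp).prime)
    fun p hp ↦ Int.natCast_dvd.1 ?_
  exact h.prime_dvd_two_mul hs (Nat.prime_of_mem_primeFactors hp) (Nat.dvd_of_mem_primeFactors hp)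

lemma exists_eq_sq_mul (h : IsAmbiguousClass s c) :
    ∃ k t : ℕ, s = k ^ 2 * t ∧ (t : ℤ) ∣ 2 * d ∧ IsAmbiguousClass t c := by
  obtain ⟨t, k, rfl, ht⟩ := Nat.sq_mul_squarefree s
  have h' := h.of_sq_mul (Nat.cast_ne_zero.2 ht.ne_zero)
  exact ⟨k, t, rfl, h'.dvd_two_mul_of_squarefree ht, h'⟩

end IsAmbiguousClass

lemma exists_isAmbiguousClass_of_sq_eq_one (hd : ¬ IsNormModSq d (-1)) {c : ClassGroup (ℤ√d)}
    (hc : c ^ 2 = 1) : ∃ s, IsAmbiguousClass s c := by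
  obtain ⟨I, rfl⟩ := ClassGroup.mk0_surjective c
  set N : ℕ := Ideal.absNorm (I : Ideal (ℤ√d))
  have hN0 : N ≠ 0 := Ideal.absNorm_eq_zero_iff.not.2 (nonZeroDivisors.coe_ne_zero I)
  obtain ⟨x, hx0, hx⟩ : ∃ x : ℤ√d, 0 ≤ x.re ∧ (I : Ideal (ℤ√d)) ^ 2 = Ideal.span {x} := by
    obtain ⟨x, hx⟩ := (Submodule.isPrincipal_iff _).1 <|
      (ClassGroup.mk0_eq_one_iff _).1 ((map_pow _ I 2).trans hc)
    rcases le_total 0 x.re with h | h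
    · exact ⟨x, h, hx⟩
    · exact ⟨-x, by simpa, by rw [Ideal.span_singleton_neg, hx]⟩
  have hnorm : x.norm = N ^ 2 := by
    have habs : x.norm.natAbs = ((N ^ 2 : ℕ) : ℤ).natAbs := by
      rw [← absNorm_span_zsqrtd, ← hx, map_pow, Int.natAbs_natCast]
    refine (Int.natAbs_eq_natAbs_iff.1 habs).elim (by simp) fun hneg ↦ ?_
    exact absurd ⟨x, N, by exact_mod_cast hN0, by rw [hneg]; push_cast; ring⟩ hd
  obtain ⟨a, ha⟩ := Int.eq_ofNat_of_zero_le hx0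
  have hspan : Ideal.span {x + (N : ℤ√d)} ^ 2 =
      (I : Ideal (ℤ√d)) ^ 2 * Ideal.span {((2 * (a + N) : ℕ) : ℤ√d)} := by
    rw [hx, Ideal.span_singleton_pow, Ideal.span_singleton_mul_span_singleton]
    have hsq := sq_add_intCast_of_norm_eq_sq hnorm
    rw [ha] at hsq
    exact congrArg (fun z ↦ Ideal.span {z}) (by exact_mod_cast hsq)
  have hs : 2 * (a + N) ≠ 0 := by lia
  refine ⟨2 * (a + N), ?_⟩
  rw [← inv_eq_of_mul_eq_one_left ((sq _).symm.trans hc)]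
  exact isAmbiguousClass_inv_of_span_sq_eq (Nat.cast_ne_zero.2 hs) hspan

lemma exists_isAmbiguousClass_one_not_isSquare (hd0 : 0 < d) (hd : ¬ IsNormModSq d (-1)) :
    ∃ t, IsAmbiguousClass t (1 : ClassGroup (ℤ√d)) ∧ ¬ IsSquare (t : ℤ√d) := by
  obtain ⟨ε, hε⟩ := Pell.IsFundamental.exists_of_not_isSquare hd0 <|
    not_isSquare_of_not_isNormModSq_neg_one hd0.ne' hd
  have hunit : IsUnit (ε : ℤ√d) :=
    Zsqrtd.isUnit_iff_norm_isUnit _ |>.2 <| by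
      rw [Zsqrtd.norm_eq_one_iff_mem_unitary.2 ε.2]
      exact isUnit_one
  obtain ⟨a, ha⟩ := Int.eq_ofNat_of_zero_le hε.x_pos.le
  have hkey : (ε + 1 : ℤ√d) ^ 2 = ε * ((2 * (a + 1) : ℕ) : ℤ√d) := by
    have hnorm : (ε : ℤ√d).norm = 1 ^ 2 := Zsqrtd.norm_eq_one_iff_mem_unitary.2 ε.2
    have := sq_add_intCast_of_norm_eq_sq hnorm
    rw [show (ε : ℤ√d).re = a from ha] at this
    exact_mod_cast this
  have ht : 2 * (a + 1) ≠ 0 := by lia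
  refine ⟨_, isAmbiguousClass_one_of_span_sq_eq (x := ε + 1) (Nat.cast_ne_zero.2 ht) ?_, ?_⟩
  · rw [Ideal.span_singleton_pow, hkey, Ideal.span_singleton_mul_left_unit hunit]
  · rintro ⟨γ, hγ⟩
    refine not_isSquare_of_isFundamental hε hd <|
      isSquare_of_sq_eq_mul_sq (b := γ) ?_ (by rw [hkey, hγ, sq])
    rintro rfl
    exact ht (by exact_mod_cast hγ.trans (mul_zero _))

lemma exists_isAmbiguousClass_of_eq_mul {q : ℕ} {r : ℤ} (hq : q ≠ 0) (hd : d = q * r)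
    (hqr : IsCoprime (q : ℤ) r) : ∃ c : ClassGroup (ℤ√d), IsAmbiguousClass q c := by
  obtain ⟨u, v, huv⟩ := hqr
  have huv' : (u * q + v * r : ℤ√d) = 1 := by exact_mod_cast congrArg (Int.cast (R := ℤ√d)) huv
  have hd' : (Zsqrtd.sqrtd * Zsqrtd.sqrtd : ℤ√d) = q * r := by
    rw [Zsqrtd.dmuld]
    exact_mod_cast congrArg (Int.cast (R := ℤ√d)) hd
  refine exists_isAmbiguousClass_of_mem_span_pair_sq (w := Zsqrtd.sqrtd) (Nat.cast_ne_zero.2 hq)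
    ⟨r, by rw [sq, hd']⟩ (a := u) (b := 0) (e := v) ?_
  linear_combination -(q : ℤ√d) * huv' - (v : ℤ√d) * hd'

lemma exists_isAmbiguousClass_two (hd : d % 4 = 3) :
    ∃ c : ClassGroup (ℤ√d), IsAmbiguousClass 2 c := by
  obtain ⟨k, hk⟩ : ∃ k, d = 4 * k + 3 := ⟨d / 4, by lia⟩
  have hd' : (Zsqrtd.sqrtd * Zsqrtd.sqrtd : ℤ√d) = 4 * k + 3 := by
    rw [Zsqrtd.dmuld]
    exact_mod_cast congrArg (Int.cast (R := ℤ√d)) hk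
  refine exists_isAmbiguousClass_of_mem_span_pair_sq (w := (1 + Zsqrtd.sqrtd : ℤ√d))
    (Nat.cast_ne_zero.2 two_ne_zero) ⟨2 * (k : ℤ√d) + 2 + Zsqrtd.sqrtd, ?_⟩
    (a := -k) (b := -1) (e := 1) ?_
  · push_cast
    linear_combination hd'
  · push_cast
    linear_combination -hd'

lemma isAmbiguousClass_one_of_natCast {m : ℕ} (hm : m ≠ 0) [IsDedekindDomain (ℤ√m)] :
    IsAmbiguousClass m (1 : ClassGroup (ℤ√m)) :=
  isAmbiguousClass_one_of_span_sq_eq (x := Zsqrtd.sqrtd) (Nat.cast_ne_zero.2 hm) <| by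
    rw [Ideal.span_singleton_pow, sq, Zsqrtd.dmuld, Int.cast_natCast]

end QuadraticOrder

section QuadraticGenerator

lemma nonempty_zsqrtd_ringEquiv {R : Type*} [CommRing R] [CharZero R] {d : ℤ} (hd : ¬ IsSquare d)
    {α : R} (hα : α * α = d) (hgen : Algebra.adjoin ℤ {α} = ⊤) : Nonempty (ℤ√d ≃+* R) := by
  refine ⟨.ofBijective (Zsqrtd.lift ⟨α, hα⟩)
    ⟨Zsqrtd.lift_injective _ fun n hn ↦ hd ⟨n, hn⟩, fun x ↦ ?_⟩⟩
  have hle : Algebra.adjoin ℤ {α} ≤ (Zsqrtd.lift ⟨α, hα⟩).toIntAlgHom.range :=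
    Algebra.adjoin_le (Set.singleton_subset_iff.2 ⟨Zsqrtd.sqrtd, by simp⟩)
  exact hle (hgen ▸ Algebra.mem_top)

lemma isDedekindDomain_of_ringEquiv {R S : Type*} [CommRing R] [CommRing S] [IsDedekindDomain R]
    (e : R ≃+* S) : IsDedekindDomain S := by
  have := e.symm.toMulEquiv.isDomain R
  have := isNoetherianRing_of_ringEquiv R e
  have := Ring.DimensionLEOne.of_ringEquiv e.symm
  have := IsIntegrallyClosed.of_equiv e
  exact { }

end QuadraticGenerator

section DengLi

variable {ι : Type*}

lemma exists_eq_prod_of_dvd_prod {l : ι → ℕ} (hl : ∀ i, (l i).Prime) {U : Finset ι} {s : ℕ}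
    (hs : s ∣ ∏ i ∈ U, l i) : ∃ T ⊆ U, s = ∏ i ∈ T, l i := by
  classical
  induction U using Finset.induction_on generalizing s with
  | empty => exact ⟨∅, subset_rfl, by simpa using hs⟩
  | insert i U hi ih =>
    rw [Finset.prod_insert hi, Nat.dvd_mul] at hs
    obtain ⟨a, b, ha, hb, rfl⟩ := hs
    obtain ⟨T, hTU, rfl⟩ := ih hb
    obtain rfl | rfl := (Nat.dvd_prime (hl i)).1 ha
    · exact ⟨T, hTU.trans (Finset.subset_insert i U), one_mul _⟩
    · exact ⟨insert i T, Finset.insert_subset_insert i hTU,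
        (Finset.prod_insert fun h ↦ hi (hTU h)).symm⟩

lemma jacobiSym_prod_left (a : ι → ℕ) (b : ℕ) (T : Finset ι) :
    jacobiSym ((∏ i ∈ T, a i : ℕ) : ℤ) b = ∏ i ∈ T, jacobiSym (a i) b := by
  classical
  induction T using Finset.induction_on with
  | empty => simp [jacobiSym.one_left]
  | insert i T hi ih =>
    rw [Finset.prod_insert hi, Finset.prod_insert hi, Nat.cast_mul, jacobiSym.mul_left, ih]

lemma jacobiSym_units_left {q : ℕ} (hq : q % 4 = 1) (u : ℤˣ) : jacobiSym u q = 1 := by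
  obtain rfl | rfl := Int.units_eq_one_or u
  · exact jacobiSym.one_left q
  · rw [Units.val_neg, Units.val_one, jacobiSym.at_neg_one (Nat.odd_iff.2 (by lia)),
      ZMod.χ₄_nat_one_mod_four hq]

lemma jacobiSym_two_left {q : ℕ} (hq : q % 8 = 5) : jacobiSym 2 q = -1 := by
  rw [jacobiSym.at_two (Nat.odd_iff.2 (by lia)), ZMod.χ₈_nat_mod_eight, hq]
  rfl

variable [Fintype ι]

/-- `m = ∏ l i` is a product of primes of the shape considered by Deng and Li: an even number of
factors, `l i₀ ≡ 3 (mod 8)`, every other factor is `5 (mod 8)`, and among the Legendre symbols of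
pairs of factors only `(l i₀ / l j)` for `j ≠ i₁` is `1`. Here `i₀` and `i₁` are the indices `1`
and `2` of the original notation. -/
structure IsDengLiFactorization (m : ℕ) (l : ι → ℕ) (i₀ i₁ : ι) : Prop where
  prod_eq : ∏ i, l i = m
  even_card : Even (Fintype.card ι)
  prime : ∀ i, (l i).Prime
  injective : Function.Injective l
  ne : i₁ ≠ i₀
  mod_eight_eq_three : l i₀ % 8 = 3
  mod_eight_eq_five : ∀ i, i ≠ i₀ → l i % 8 = 5
  jacobiSym_eq_neg_one : jacobiSym (l i₀) (l i₁) = -1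
  jacobiSym_eq_one : ∀ i, i ≠ i₀ → i ≠ i₁ → jacobiSym (l i₀) (l i) = 1
  jacobiSym_of_ne : ∀ i j, i ≠ i₀ → j ≠ i₀ → i ≠ j → jacobiSym (l i) (l j) = -1

namespace IsDengLiFactorization

variable {m : ℕ} {l : ι → ℕ} {i₀ i₁ : ι} (h : IsDengLiFactorization m l i₀ i₁)
include h

lemma not_dvd_prod {T : Finset ι} {i : ι} (hi : i ∉ T) : ¬ l i ∣ ∏ j ∈ T, l j := by
  rw [(h.prime i).prime.dvd_finsetProd_iff]
  rintro ⟨j, hj, hij⟩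
  rw [Nat.prime_dvd_prime_iff_eq (h.prime i) (h.prime j)] at hij
  exact hi (h.injective hij ▸ hj)

lemma dvd (i : ι) : l i ∣ m := h.prod_eq ▸ Finset.dvd_prod_of_mem l (Finset.mem_univ i)

lemma exists_eq_mul (i : ι) : ∃ r, m = l i * r ∧ (l i).Coprime r := by
  classical
  refine ⟨∏ j ∈ Finset.univ.erase i, l j, ?_, (Nat.Prime.coprime_iff_not_dvd (h.prime i)).2 <|
    h.not_dvd_prod (Finset.notMem_erase i _)⟩
  rw [Finset.mul_prod_erase _ _ (Finset.mem_univ i), h.prod_eq]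

lemma not_mul_self_dvd (i : ι) : ¬ (l i * l i : ℤ) ∣ m := by
  obtain ⟨r, rfl, hr⟩ := h.exists_eq_mul i
  intro hdvd
  have : l i ∣ r := Nat.dvd_of_mul_dvd_mul_left (h.prime i).pos (by exact_mod_cast hdvd)
  exact (h.prime i).ne_one (hr.eq_one_of_dvd this)

lemma prod_ne_zero (T : Finset ι) : ∏ j ∈ T, l j ≠ 0 :=
  Finset.prod_ne_zero_iff.2 fun j _ ↦ (h.prime j).ne_zero

lemma ne_zero : m ≠ 0 := h.prod_eq ▸ h.prod_ne_zero _

lemma mod_four_eq_three : m % 4 = 3 := by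
  classical
  have hmod (i : ι) : l i % 4 = if i = i₀ then 3 else 1 := by
    split_ifs with hi
    · have := h.mod_eight_eq_three
      lia
    · have := h.mod_eight_eq_five i hi
      lia
  simp [← h.prod_eq, Finset.prod_nat_mod, hmod]

lemma not_isNormModSq_neg_one : ¬ IsNormModSq m (-1) := by
  refine not_isNormModSq_neg_one_of_mod_four_eq_three (h.prime i₀) ?_
    (Int.natCast_dvd_natCast.2 (h.dvd i₀)) (h.not_mul_self_dvd i₀)
  have := h.mod_eight_eq_three
  lia

lemma not_isSquare : ¬ IsSquare (m : ℤ) :=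
  not_isSquare_of_not_isNormModSq_neg_one (Nat.cast_ne_zero.2 h.ne_zero) h.not_isNormModSq_neg_one

lemma jacobiSym_of_isNormModSq {c : ℤ} (hc : IsNormModSq m c) {i : ι} (hi : ¬ (l i : ℤ) ∣ c) :
    jacobiSym c (l i) = 1 :=
  hc.jacobiSym_eq_one (h.prime i) (Int.natCast_dvd_natCast.2 (h.dvd i)) (h.not_mul_self_dvd i) hi

lemma jacobiSym_unit_mul_two_pow_mul_prod (u : ℤˣ) (e : ℕ) {T : Finset ι} (h₀ : i₀ ∉ T) {i : ι}
    (hi : i ≠ i₀) (hiT : i ∉ T) :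
    jacobiSym (u * (2 ^ e * ∏ j ∈ T, l j : ℕ)) (l i) = (-1) ^ (e + T.card) := by
  have hmod := h.mod_eight_eq_five i hi
  have hprod : ∏ j ∈ T, jacobiSym (l j) (l i) = (-1) ^ T.card :=
    Finset.prod_eq_pow_card fun j hj ↦
      h.jacobiSym_of_ne j i (ne_of_mem_of_not_mem hj h₀) hi (ne_of_mem_of_not_mem hj hiT)
  rw [jacobiSym.mul_left, jacobiSym_units_left (by lia), Nat.cast_mul, jacobiSym.mul_left,
    jacobiSym_prod_left, hprod, Nat.cast_pow, jacobiSym.pow_left, Nat.cast_ofNat,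
    jacobiSym_two_left hmod, one_mul, pow_add]

lemma isNormModSq_compl [DecidableEq ι] {u : ℤˣ} {e : ℕ} {T : Finset ι}
    (hu : IsNormModSq m (u * (2 ^ e * ∏ j ∈ T, l j : ℕ))) :
    IsNormModSq m ((-u : ℤˣ) * (2 ^ e * ∏ j ∈ Tᶜ, l j : ℕ)) := by
  have hm : (m : ℤ) = (∏ j ∈ T, l j : ℕ) * (∏ j ∈ Tᶜ, l j : ℕ) := by
    rw [← Nat.cast_mul, Finset.prod_mul_prod_compl, h.prod_eq]
  refine IsNormModSq.of_sq_mul (Nat.cast_ne_zero.2 (h.prod_ne_zero T)) ?_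
  convert hu.mul (.neg_self m) using 1
  conv_rhs => rw [hm]
  push_cast
  ring

lemma odd (i : ι) : Odd (l i) := by
  refine (h.prime i).odd_of_ne_two fun h2 ↦ ?_
  have := h2 ▸ h.dvd i
  have := h.mod_four_eq_three
  lia

lemma not_dvd_unit_mul_two_pow_mul_prod (u : ℤˣ) (e : ℕ) {T : Finset ι} {i : ι} (hiT : i ∉ T) :
    ¬ (l i : ℤ) ∣ u * (2 ^ e * ∏ j ∈ T, l j : ℕ) := by
  rw [u.isUnit.dvd_mul_left, Int.natCast_dvd_natCast, (h.prime i).dvd_mul, not_or]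
  exact ⟨fun h2 ↦ (h.odd i).ne_two_of_dvd_nat dvd_rfl <|
    (Nat.prime_dvd_prime_iff_eq (h.prime i) Nat.prime_two).1 ((h.prime i).dvd_of_dvd_pow h2),
    h.not_dvd_prod hiT⟩

lemma jacobiSym_eq_neg_one_pow_of_mem {u : ℤˣ} {e : ℕ} {T : Finset ι} (h₀ : i₀ ∉ T)
    (hu : IsNormModSq m (u * (2 ^ e * ∏ j ∈ T, l j : ℕ))) {i : ι} (hiT : i ∈ T) :
    jacobiSym (l i₀) (l i) = (-1) ^ (e + T.card + 1) := by
  classical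
  set U : Finset ι := (insert i₀ T)ᶜ with hU
  have hi₀U : i₀ ∉ U := by simp [hU]
  have hTU : Tᶜ = insert i₀ U := by
    rw [hU, Finset.compl_insert, Finset.insert_erase (Finset.mem_compl.2 h₀)]
  have hcard : Even (T.card + 1 + U.card) := by
    rw [← Finset.card_insert_of_notMem h₀, hU, Finset.card_add_card_compl]
    exact h.even_card
  -- The argument is divisible by `l i`, which multiplication by `-m = N(√m)` repairs.
  have hone := h.jacobiSym_of_isNormModSq (h.isNormModSq_compl hu) (i := i)
    (h.not_dvd_unit_mul_two_pow_mul_prod _ _ (by simpa))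
  rw [hTU, Finset.prod_insert hi₀U, mul_left_comm, Nat.cast_mul, mul_left_comm,
    jacobiSym.mul_left, h.jacobiSym_unit_mul_two_pow_mul_prod _ _ hi₀U
      (ne_of_mem_of_not_mem hiT h₀) (by simp [hU, hiT])] at hone
  calc jacobiSym (l i₀) (l i)
      = jacobiSym (l i₀) (l i) * (-1) ^ (e + U.card) * (-1) ^ (e + U.card) := by
        rw [mul_assoc, ← pow_add, (Even.add_self _).neg_one_pow, mul_one]
    _ = (-1) ^ (e + T.card + 1) := by
        rw [hone, one_mul]
        exact neg_one_pow_congr (by grind)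

lemma even_of_isNormModSq {u : ℤˣ} {e : ℕ} {T : Finset ι} (h₀ : i₀ ∉ T)
    (hu : IsNormModSq m (u * (2 ^ e * ∏ j ∈ T, l j : ℕ))) : Even (e + T.card) := by
  rw [← neg_one_pow_eq_one_iff_even (R := ℤ) (by decide)]
  by_cases hT : i₁ ∈ T
  · have hJ := h.jacobiSym_eq_neg_one_pow_of_mem h₀ hu hT
    rwa [h.jacobiSym_eq_neg_one, pow_succ, mul_neg_one, neg_inj, eq_comm] at hJ
  · rw [← h.jacobiSym_unit_mul_two_pow_mul_prod u _ h₀ h.ne hT]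
    exact h.jacobiSym_of_isNormModSq hu (h.not_dvd_unit_mul_two_pow_mul_prod _ _ hT)

lemma subset_singleton_of_isNormModSq {u : ℤˣ} {e : ℕ} {T : Finset ι} (h₀ : i₀ ∉ T)
    (hu : IsNormModSq m (u * (2 ^ e * ∏ j ∈ T, l j : ℕ))) : T ⊆ {i₁} := by
  intro i hi
  rw [Finset.mem_singleton]
  by_contra hi₁
  have hJ := h.jacobiSym_eq_neg_one_pow_of_mem h₀ hu hi
  rw [h.jacobiSym_eq_one i (ne_of_mem_of_not_mem hi h₀) hi₁,
    (h.even_of_isNormModSq h₀ hu).add_one.neg_one_pow] at hJ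
  contradiction

lemma eq_empty_or_eq_singleton_of_isNormModSq {u : ℤˣ} {e : ℕ} (he : e ≤ 1) {T : Finset ι}
    (h₀ : i₀ ∉ T) (hu : IsNormModSq m (u * (2 ^ e * ∏ j ∈ T, l j : ℕ))) :
    e = 0 ∧ T = ∅ ∨ e = 1 ∧ T = {i₁} := by
  have heven := h.even_of_isNormModSq h₀ hu
  obtain rfl | rfl := Finset.subset_singleton_iff.1 (h.subset_singleton_of_isNormModSq h₀ hu)
  · rw [Finset.card_empty] at heven
    exact .inl ⟨by grind, rfl⟩
  · rw [Finset.card_singleton] at heven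
    exact .inr ⟨by grind, rfl⟩

variable [IsDedekindDomain (ℤ√m)]

lemma exists_isAmbiguousClass (i : ι) : ∃ c : ClassGroup (ℤ√m), IsAmbiguousClass (l i) c := by
  obtain ⟨r, hr, hcop⟩ := h.exists_eq_mul i
  exact exists_isAmbiguousClass_of_eq_mul (h.prime i).ne_zero (by exact_mod_cast hr)
    (Nat.isCoprime_iff_coprime.2 hcop)

lemma isAmbiguousClass_compl [DecidableEq ι] {e : ℕ} {T : Finset ι} {c : ClassGroup (ℤ√m)}
    (hc : IsAmbiguousClass (2 ^ e * ∏ j ∈ T, l j) c) :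
    IsAmbiguousClass (2 ^ e * ∏ j ∈ Tᶜ, l j) c := by
  refine IsAmbiguousClass.of_sq_mul (k := ∏ j ∈ T, l j) ?_ ?_
  · exact Nat.cast_ne_zero.2 (mul_ne_zero (by simp) (h.prod_ne_zero _))
  · have hm := (isAmbiguousClass_one_of_natCast h.ne_zero).mul hc
    rw [one_mul] at hm
    convert hm using 1
    rw [show m = (∏ j ∈ T, l j) * ∏ j ∈ Tᶜ, l j by rw [Finset.prod_mul_prod_compl, h.prod_eq]]
    ring

lemma exists_prod_of_isAmbiguousClass {t : ℕ} {c : ClassGroup (ℤ√m)} (hc : IsAmbiguousClass t c) :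
    ∃ e ≤ 1, ∃ T : Finset ι, i₀ ∉ T ∧ IsAmbiguousClass (2 ^ e * ∏ j ∈ T, l j) c ∧
      (e = 0 → T = ∅ → IsSquare (t : ℤ√m)) := by
  classical
  obtain ⟨k, s, rfl, hs, hc⟩ := hc.exists_eq_sq_mul
  rw [← h.prod_eq, ← Nat.cast_ofNat, ← Nat.cast_mul, Int.natCast_dvd_natCast, Nat.dvd_mul] at hs
  obtain ⟨a, b, ha, hb, rfl⟩ := hs
  obtain ⟨e, he, rfl⟩ := (Nat.dvd_prime_pow Nat.prime_two).1 ((pow_one 2).symm ▸ ha)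
  obtain ⟨T, -, rfl⟩ := exists_eq_prod_of_dvd_prod h.prime hb
  by_cases h₀ : i₀ ∈ T
  · refine ⟨e, he, Tᶜ, by simpa, h.isAmbiguousClass_compl hc, fun he₀ hT ↦ ?_⟩
    rw [he₀, (Finset.compl_eq_empty_iff T).1 hT, h.prod_eq]
    exact ⟨(k : ℤ√m) * Zsqrtd.sqrtd, by
      push_cast
      rw [mul_mul_mul_comm, Zsqrtd.dmuld, Int.cast_natCast]
      ring⟩
  · refine ⟨e, he, T, h₀, hc, ?_⟩
    rintro rfl rfl
    exact ⟨k, by simp [sq]⟩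

lemma isAmbiguousClass_two_mul_one : IsAmbiguousClass (2 * l i₁) (1 : ClassGroup (ℤ√m)) := by
  obtain ⟨t, ht, htsq⟩ := exists_isAmbiguousClass_one_not_isSquare
    (Int.natCast_pos.2 (Nat.pos_of_ne_zero h.ne_zero)) h.not_isNormModSq_neg_one
  obtain ⟨e, he, T, h₀, hc, hsq⟩ := h.exists_prod_of_isAmbiguousClass ht
  obtain ⟨u, hu⟩ := hc.exists_isNormModSq (y := 1) (by simp)
  obtain ⟨he₀, hT⟩ | ⟨rfl, rfl⟩ := h.eq_empty_or_eq_singleton_of_isNormModSq he h₀ hu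
  · exact absurd (hsq he₀ hT) htsq
  · simpa using hc

lemma eq_empty_of_sq_mul_prod_eq_one {c : {i // i ≠ i₀} → ClassGroup (ℤ√m)}
    (hc : ∀ i : {i // i ≠ i₀}, IsAmbiguousClass (l i) (c i)) {y : ClassGroup (ℤ√m)}
    {T : Finset {i // i ≠ i₀}} (hy : y ^ 2 * ∏ i ∈ T, c i = 1) : T = ∅ := by
  have hT : IsAmbiguousClass (2 ^ 0 * ∏ i ∈ T.map (.subtype _), l i) (∏ i ∈ T, c i) := by
    simpa using IsAmbiguousClass.prod hc T
  obtain ⟨u, hu⟩ := hT.exists_isNormModSq hy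
  obtain ⟨-, hempty⟩ | ⟨h01, -⟩ :=
    h.eq_empty_or_eq_singleton_of_isNormModSq zero_le_one (by simp) hu
  · exact Finset.map_eq_empty.1 hempty
  · contradiction

lemma mem_closure_of_sq_eq_one {c : {i // i ≠ i₀} → ClassGroup (ℤ√m)}
    (hc : ∀ i : {i // i ≠ i₀}, IsAmbiguousClass (l i) (c i)) {y : ClassGroup (ℤ√m)}
    (hy : y ^ 2 = 1) : y ∈ Subgroup.closure (Set.range c) := by
  classical
  obtain ⟨t, ht⟩ := exists_isAmbiguousClass_of_sq_eq_one h.not_isNormModSq_neg_one hy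
  obtain ⟨e, -, T, h₀, hyT, -⟩ := h.exists_prod_of_isAmbiguousClass ht
  obtain ⟨cp, hcp⟩ := exists_isAmbiguousClass_two (d := m) (by exact_mod_cast h.mod_four_eq_three)
  have hmem (i) : c i ∈ Subgroup.closure (Set.range c) := Subgroup.subset_closure ⟨i, rfl⟩
  have hcp' : cp * c ⟨i₁, h.ne⟩ = 1 := (hcp.mul (hc _)).eq h.isAmbiguousClass_two_mul_one
  have hcp_mem : cp ∈ Subgroup.closure (Set.range c) :=
    eq_inv_of_mul_eq_one_left hcp' ▸ inv_mem (hmem _)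
  have hprod : IsAmbiguousClass (∏ i ∈ T, l i) (∏ i ∈ T.subtype (· ≠ i₀), c i) := by
    rw [← Finset.prod_subtype_of_mem l fun i hi ↦ ne_of_mem_of_not_mem hi h₀]
    exact IsAmbiguousClass.prod hc _
  rw [hyT.eq ((hcp.pow e).mul hprod)]
  exact mul_mem (pow_mem hcp_mem e) (prod_mem fun i _ ↦ hmem i)

theorem nonempty_sylow_two_classGroup_mulEquiv (S : Sylow 2 (ClassGroup (ℤ√m))) :
    Nonempty (S ≃* ({i // i ≠ i₀} → Multiplicative (ZMod 2))) := by
  choose c hc using h.exists_isAmbiguousClass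
  exact nonempty_sylow_two_mulEquiv (c := fun i : {i // i ≠ i₀} ↦ c i)
    (fun i ↦ (hc i).sq_eq_one) (fun _ ↦ h.mem_closure_of_sq_eq_one fun i ↦ hc i)
    (fun _ _ ↦ h.eq_empty_of_sq_mul_prod_eq_one fun i ↦ hc i) S

end IsDengLiFactorization

lemma isDengLiFactorization_fin {n : ℕ} (hneven : Even n) {l : Fin n → ℕ}
    (hprime : ∀ i, (l i).Prime) (hinj : Function.Injective l) {i₀ i₁ : Fin n} (hi₀ : (i₀ : ℕ) = 0)
    (hi₁ : (i₁ : ℕ) = 1) (hmod₀ : l i₀ % 8 = 3) (hmod : ∀ i, i ≠ i₀ → l i % 8 = 5)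
    (h₀₁ : jacobiSym (l i₀) (l i₁) = -1)
    (h₀i : ∀ i : Fin n, 2 ≤ (i : ℕ) → jacobiSym (l i₀) (l i) = 1)
    (hij : ∀ i j : Fin n, 1 ≤ (i : ℕ) → i < j → jacobiSym (l i) (l j) = -1) :
    IsDengLiFactorization (∏ i, l i) l i₀ i₁ where
  prod_eq := rfl
  even_card := by rwa [Fintype.card_fin]
  prime := hprime
  injective := hinj
  ne := by lia
  mod_eight_eq_three := hmod₀
  mod_eight_eq_five := hmod
  jacobiSym_eq_neg_one := h₀₁
  jacobiSym_eq_one i hne₀ hne₁ := h₀i i (by lia)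
  jacobiSym_of_ne i j hi hj hne := by
    rcases lt_or_gt_of_ne hne with hlt | hgt
    · exact hij i j (by lia) hlt
    · have hi5 := hmod i hi
      have hj5 := hmod j hj
      rw [jacobiSym.quadratic_reciprocity_one_mod_four (by lia) (Nat.odd_iff.2 (by lia))]
      exact hij j i (by lia) hgt

end DengLi

/-- **Deng–Li family: structure of the 2-class group.** For the real quadratic field
`K = ℚ(√m)`, `m = ℓ₁⋯ℓ_n` the Deng–Li product of primes, the 2-Sylow subgroup of the
ideal class group of `K` is isomorphic to `(ℤ/2ℤ)^(n−1)`. -/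
theorem dengLi_two_class_group
    (n : ℕ) (hn : 2 ≤ n) (hneven : Even n)
    (l : Fin n → ℕ) (hlp : ∀ i, (l i).Prime) (hlinj : Function.Injective l)
    (hl1 : l ⟨0, by omega⟩ % 8 = 3)
    (hli : ∀ i : Fin n, i ≠ ⟨0, by omega⟩ → l i % 8 = 5)
    (hleg12 : jacobiSym (l ⟨0, by omega⟩ : ℤ) (l ⟨1, by omega⟩) = -1)
    (hleg1j : ∀ j : Fin n, 2 ≤ (j : ℕ) → jacobiSym (l ⟨0, by omega⟩ : ℤ) (l j) = 1)
    (hlegij : ∀ i j : Fin n, 1 ≤ (i : ℕ) → i < j → jacobiSym (l i : ℤ) (l j) = -1)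
    (m : ℕ) (hm : m = ∏ i, l i)
    (K : Type) [Field K] [NumberField K] (hdeg : Module.finrank ℚ K = 2)
    (α : 𝓞 K) (hα : α ^ 2 = (m : 𝓞 K)) (hgen : Algebra.adjoin ℤ {α} = ⊤) :
    ∀ S : Sylow 2 (ClassGroup (𝓞 K)),
      Nonempty ((S : Subgroup (ClassGroup (𝓞 K))) ≃*
        (Fin (n - 1) → Multiplicative (ZMod 2))) := by
  subst hm
  have h := isDengLiFactorization_fin hneven hlp hlinj rfl rfl hl1 hli hleg12 hleg1j hlegij
  set m := ∏ i, l i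
  obtain ⟨e⟩ : Nonempty (ℤ√(m : ℤ) ≃+* 𝓞 K) :=
    nonempty_zsqrtd_ringEquiv h.not_isSquare (by rw [← sq, hα, Int.cast_natCast]) hgen
  have := isDedekindDomain_of_ringEquiv e.symm
  have hcard : Fintype.card {i : Fin n // i ≠ ⟨0, by omega⟩} = Fintype.card (Fin (n - 1)) := by
    simp [Fintype.card_subtype_compl]
  refine forall_sylow_nonempty_mulEquiv_of_mulEquiv (ClassGroup.mulEquiv e) fun S ↦ ?_
  exact (h.nonempty_sylow_two_classGroup_mulEquiv S).map
    (·.trans (.arrowCongr (Fintype.equivOfCardEq hcard) (.refl _)))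
end
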